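/- arXiv:math/0406353 — 2 statements merged into one kernel-verified Lean document; each statement's English description precedes it below -/
import Mathlib

section
/- There exist universal constants c, C > 0 with the following property. Let G = (V,E) be a finite connected d-regular simple graph with d ≥ 3 whose girth is at least g (g a positive integer), and let α be a real number with 1 ≤ α < √g/6. Then every subset B ⊆ V such that (B, d_G) admits an α-embedding into ℓ₂ satisfies |B| ≤ C·(d−1)^(−c·g/α²)·|V|. -/
/-!
If `B` is dense in `G`, it contains a nonempty set `S` such that from every point of `S` many pairs
of successive jumps of length `h` lead back into `S`. Consider the reversible random walk on `S`
that picks one of these pairs uniformly at random. Balls of radius below half the girth are trees,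
so the jumps spending at least `j` of their `h` steps on the way back towards a given vertex are
fewer by a factor of order `(d - 1) ^ j` than all jumps. Hence, while the walk is within half the
girth of its starting point, it moves away from it at speed at least `h`: after `t` steps it is at
expected distance at least `t h`. On the other hand Hilbert space has Markov type 2, so under an
`α`-embedding the root mean square displacement after `t` steps is at most `2 α h √t`. Therefore
`t ≤ 4 α²`, which fails for `h ≈ g / (20 α²)` and `t ≈ g / (4 h)`.
-/

namespace GirthRamsey

open Finset Matrix

section MarkovType

lemma sum_sum_mul_inner_nonneg {ι E : Type*} [Fintype ι] [NormedAddCommGroup E]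
    [InnerProductSpace ℝ E] {M : Matrix ι ι ℝ} (hM : M.PosSemidef) (f : ι → E) :
    0 ≤ ∑ i, ∑ j, M i j * inner ℝ (f i) (f j) := by
  have := (hM.hadamard (posSemidef_gram ℝ f)).dotProduct_mulVec_nonneg 1
  simpa [dotProduct, mulVec] using this

variable {ι : Type*} [Fintype ι] [DecidableEq ι] {w : ι → ℝ} {P : Matrix ι ι ℝ}

lemma posSemidef_diagonal_mul_conj {Q R : Matrix ι ι ℝ} (hQ : (diagonal w * Q).PosSemidef)
    (hR : SemiconjBy (diagonal w) R Rᵀ) : (diagonal w * (R * Q * R)).PosSemidef := by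
  have eq : diagonal w * (R * Q * R) = Rᴴ * (diagonal w * Q) * R := by
    rw [conjTranspose_eq_transpose_of_trivial, ← mul_assoc, ← mul_assoc, hR.eq, mul_assoc Rᵀ]
  exact eq ▸ hQ.conjTranspose_mul_mul_same R

lemma mul_le_sum_pow_mul_of_drift (hP : P ∈ rowStochastic ℝ ι) {D : ι → ℝ} {o : ι} {δ : ℝ}
    (hD : 0 ≤ D o) {t : ℕ}
    (drift : ∀ k < t, ∀ i, (P ^ k) o i ≠ 0 → D i + δ ≤ ∑ j, P i j * D j) :
    t * δ ≤ ∑ j, (P ^ t) o j * D j := by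
  induction t with
  | zero => simpa [one_apply] using hD
  | succ t ih =>
    have hPt := pow_mem hP t
    calc ((t + 1 : ℕ) : ℝ) * δ ≤ ∑ i, (P ^ t) o i * D i + δ := by
          have := ih fun k hk ↦ drift k (by omega)
          push_cast
          linarith
      _ = ∑ i, (P ^ t) o i * (D i + δ) := by
          simp_rw [mul_add, sum_add_distrib, ← sum_mul, sum_row_of_mem_rowStochastic hPt, one_mul]
      _ ≤ ∑ i, (P ^ t) o i * ∑ j, P i j * D j := by
          refine sum_le_sum fun i _ ↦ ?_
          obtain hi | hi := eq_or_ne ((P ^ t) o i) 0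
          · simp [hi]
          · exact mul_le_mul_of_nonneg_left (drift t (by omega) i hi)
              (nonneg_of_mem_rowStochastic hPt)
      _ = ∑ j, (P ^ (t + 1)) o j * D j := by
          simp_rw [pow_succ, mul_apply, sum_mul, mul_sum]
          rw [sum_comm]
          simp_rw [mul_assoc]

/-- `P` is the transition matrix of a Markov chain on `ι` that is reversible with respect to the
weights `w`, which need not sum to `1`. -/
structure IsReversible (w : ι → ℝ) (P : Matrix ι ι ℝ) : Prop where
  weight_nonneg : 0 ≤ w
  mem_rowStochastic : P ∈ rowStochastic ℝ ι
  detailed_balance : ∀ i j, w i * P i j = w j * P j i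

namespace IsReversible

lemma weight_mul_nonneg (h : IsReversible w P) (i j : ι) : 0 ≤ w i * P i j :=
  mul_nonneg (h.weight_nonneg i) (nonneg_of_mem_rowStochastic h.mem_rowStochastic)

lemma semiconjBy (h : IsReversible w P) : SemiconjBy (diagonal w) P Pᵀ := by
  ext i j
  simp only [diagonal_mul, mul_diagonal, transpose_apply, h.detailed_balance i j, mul_comm]

lemma pow (h : IsReversible w P) (k : ℕ) : IsReversible w (P ^ k) where
  weight_nonneg := h.weight_nonneg
  mem_rowStochastic := pow_mem h.mem_rowStochastic k
  detailed_balance i j := by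
    have balance : diagonal w * P ^ k = (P ^ k)ᵀ * diagonal w := by
      rw [transpose_pow]
      exact h.semiconjBy.pow_right k
    simpa only [diagonal_mul, mul_diagonal, transpose_apply, mul_comm] using congr_fun₂ balance i j

lemma sum_sum_mul_source (h : IsReversible w P) (a : ι → ℝ) :
    ∑ i, ∑ j, w i * P i j * a i = ∑ i, w i * a i := by
  simp_rw [← sum_mul, ← mul_sum, sum_row_of_mem_rowStochastic h.mem_rowStochastic, mul_one]

lemma sum_sum_mul_target (h : IsReversible w P) (a : ι → ℝ) :
    ∑ i, ∑ j, w i * P i j * a j = ∑ i, w i * a i := by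
  rw [sum_comm, ← h.sum_sum_mul_source]
  simp_rw [h.detailed_balance]

lemma posSemidef_diagonal_mul_one_add (h : IsReversible w P) :
    (diagonal w * (1 + P)).PosSemidef := by
  refine .of_dotProduct_mulVec_nonneg ?_ fun x ↦ ?_
  · rw [IsHermitian, conjTranspose_eq_transpose_of_trivial, transpose_mul, diagonal_transpose,
      mul_add, transpose_add, add_mul, transpose_one, one_mul, mul_one, h.semiconjBy.eq]
  · have form_eq : star x ⬝ᵥ (diagonal w * (1 + P)) *ᵥ x =
        (∑ i, ∑ j, w i * P i j * (x i + x j) ^ 2) / 2 := by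
      have expand : ∀ i j, w i * P i j * (x i + x j) ^ 2 = w i * P i j * x i ^ 2 +
          w i * P i j * x j ^ 2 + 2 * (x i * (w i * P i j * x j)) := fun i j ↦ by ring
      simp_rw [expand, sum_add_distrib, h.sum_sum_mul_source fun i ↦ x i ^ 2,
        h.sum_sum_mul_target fun i ↦ x i ^ 2, ← mul_sum]
      simp only [dotProduct, mulVec, star_trivial, diagonal_mul, Matrix.add_apply, mul_add, add_mul,
        sum_add_distrib, one_apply, mul_ite, mul_one, mul_zero, ite_mul, zero_mul, sum_ite_eq,
        mem_univ, if_true]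
      rw [sum_congr rfl fun i _ ↦ show x i * (w i * x i) = w i * x i ^ 2 by ring]
      ring
    rw [form_eq]
    exact div_nonneg (sum_nonneg fun i _ ↦ sum_nonneg fun j _ ↦
      mul_nonneg (h.weight_mul_nonneg i j) (sq_nonneg _)) zero_le_two

lemma semiconjBy_one_sub (h : IsReversible w P) : SemiconjBy (diagonal w) (1 - P) (1 - P)ᵀ := by
  rw [transpose_sub, transpose_one]
  exact (SemiconjBy.one_right _).sub_right h.semiconjBy

lemma posSemidef_sq_one_sub_mul_geom_sum (h : IsReversible w P) (t : ℕ) :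
    (diagonal w * ((1 - P) ^ 2 * ∑ k ∈ range t, P ^ k)).PosSemidef := by
  induction t using Nat.twoStepInduction with
  | zero => simpa using PosSemidef.zero
  | one =>
    have := posSemidef_diagonal_mul_conj (w := w) (Q := 1)
      (by simpa using PosSemidef.diagonal h.weight_nonneg) h.semiconjBy_one_sub
    simpa [sq] using this
  | more t ih _ =>
    have first_two := posSemidef_diagonal_mul_conj h.posSemidef_diagonal_mul_one_add
      h.semiconjBy_one_sub
    have rest := posSemidef_diagonal_mul_conj ih h.semiconjBy
    have split : (1 - P) ^ 2 * ∑ k ∈ range (t + 2), P ^ k =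
        (1 - P) * (1 + P) * (1 - P) + P * ((1 - P) ^ 2 * ∑ k ∈ range t, P ^ k) * P := by
      have geom : ∑ k ∈ range t, P ^ (k + 1 + 1) = P * (∑ k ∈ range t, P ^ k) * P := by
        simp only [mul_sum, sum_mul, ← pow_succ, ← pow_succ']
      rw [sum_range_succ', sum_range_succ', geom]
      noncomm_ring
    rw [split, mul_add]
    exact first_two.add rest

lemma posSemidef_mul_one_sub_sub_one_sub_pow (h : IsReversible w P) (t : ℕ) :
    (diagonal w * ((t : ℝ) • (1 - P) - (1 - P ^ t))).PosSemidef := by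
  induction t with
  | zero => simpa using PosSemidef.zero
  | succ t ih =>
    have step : ((t + 1 : ℕ) : ℝ) • (1 - P) - (1 - P ^ (t + 1)) =
        ((t : ℝ) • (1 - P) - (1 - P ^ t)) + (1 - P) ^ 2 * ∑ k ∈ range t, P ^ k := by
      rw [sq, mul_assoc, mul_neg_geom_sum, pow_succ']
      push_cast
      rw [add_smul, one_smul]
      noncomm_ring
    rw [step, mul_add]
    exact ih.add (h.posSemidef_sq_one_sub_mul_geom_sum t)

end IsReversible

variable {E : Type*} [NormedAddCommGroup E]

/-- The Dirichlet energy `𝔼 ‖f X₀ - f X₁‖²` of one step of the chain `P` started from the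
(unnormalized) distribution `w`. -/
def dirichletEnergy (w : ι → ℝ) (P : Matrix ι ι ℝ) (f : ι → E) : ℝ :=
  ∑ i, ∑ j, w i * P i j * ‖f i - f j‖ ^ 2

namespace IsReversible

lemma dirichletEnergy_le (h : IsReversible w P) {f : ι → E} {R : ℝ}
    (hR : ∀ i j, P i j ≠ 0 → ‖f i - f j‖ ≤ R) :
    dirichletEnergy w P f ≤ (∑ i, w i) * R ^ 2 := by
  rw [sum_mul, ← h.sum_sum_mul_source]
  refine sum_le_sum fun i _ ↦ sum_le_sum fun j _ ↦ ?_
  obtain hij | hij := eq_or_ne (P i j) 0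
  · simp [hij]
  · gcongr
    · exact h.weight_mul_nonneg i j
    · exact hR i j hij

variable [InnerProductSpace ℝ E]

lemma dirichletEnergy_eq (h : IsReversible w P) (f : ι → E) :
    dirichletEnergy w P f =
      2 * ∑ i, ∑ j, (diagonal w * (1 - P)) i j * inner ℝ (f i) (f j) := by
  have expand : ∀ i j, w i * P i j * ‖f i - f j‖ ^ 2 = w i * P i j * ‖f i‖ ^ 2 +
      w i * P i j * ‖f j‖ ^ 2 - 2 * (w i * P i j * inner ℝ (f i) (f j)) := fun i j ↦ by
    rw [norm_sub_sq_real]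
    ring
  simp_rw [dirichletEnergy, expand, sum_sub_distrib, sum_add_distrib,
    h.sum_sum_mul_source fun i ↦ ‖f i‖ ^ 2, h.sum_sum_mul_target fun i ↦ ‖f i‖ ^ 2, ← mul_sum]
  simp only [diagonal_mul, Matrix.sub_apply, mul_sub, sub_mul, sum_sub_distrib, one_apply, mul_ite,
    mul_one, mul_zero, ite_mul, zero_mul, sum_ite_eq, mem_univ, if_true,
    real_inner_self_eq_norm_sq]
  ring

/-- Hilbert space has Markov type 2 with constant 1. -/
theorem dirichletEnergy_pow_le (h : IsReversible w P) (f : ι → E) (t : ℕ) :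
    dirichletEnergy w (P ^ t) f ≤ t * dirichletEnergy w P f := by
  have := sum_sum_mul_inner_nonneg (h.posSemidef_mul_one_sub_sub_one_sub_pow t) f
  rw [h.dirichletEnergy_eq, (h.pow t).dirichletEnergy_eq]
  simp only [mul_sub, sub_mul, Matrix.sub_apply, sum_sub_distrib, Matrix.mul_smul,
    Matrix.smul_apply, smul_eq_mul, mul_assoc, ← mul_sum] at this ⊢
  linarith

theorem mul_sq_le_sq_of_drift (h : IsReversible w P) (hw : 0 < ∑ i, w i) {f : ι → E}
    {D : ι → ι → ℝ} {δ R : ℝ} {t : ℕ} (hδ : 0 ≤ δ) (hD_self : ∀ o, D o o = 0)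
    (hDf : ∀ o i, |D o i| ≤ ‖f o - f i‖) (hR : ∀ i j, P i j ≠ 0 → ‖f i - f j‖ ≤ R)
    (drift : ∀ o, ∀ k < t, ∀ i, (P ^ k) o i ≠ 0 → D o i + δ ≤ ∑ j, P i j * D o j) :
    t * δ ^ 2 ≤ R ^ 2 := by
  have displacement : ∀ o, (t * δ) ^ 2 ≤ ∑ j, (P ^ t) o j * ‖f o - f j‖ ^ 2 := fun o ↦ by
    have hPt := (h.pow t).mem_rowStochastic
    calc (t * δ) ^ 2 ≤ (∑ j, (P ^ t) o j * D o j) ^ 2 := by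
          gcongr
          exact mul_le_sum_pow_mul_of_drift h.mem_rowStochastic (hD_self o).ge (drift o)
      _ ≤ ∑ j, (P ^ t) o j * D o j ^ 2 :=
          Real.pow_arith_mean_le_arith_mean_pow_of_even _ _ _
            (fun _ _ ↦ nonneg_of_mem_rowStochastic hPt) (sum_row_of_mem_rowStochastic hPt o)
            even_two
      _ ≤ ∑ j, (P ^ t) o j * ‖f o - f j‖ ^ 2 := sum_le_sum fun j _ ↦
          mul_le_mul_of_nonneg_left (sq_le_sq.mpr ((hDf o j).trans (le_abs_self _)))
            (nonneg_of_mem_rowStochastic hPt)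
  have energy : (∑ i, w i) * (t * δ) ^ 2 ≤ (∑ i, w i) * (t * R ^ 2) :=
    calc (∑ i, w i) * (t * δ) ^ 2 ≤ dirichletEnergy w (P ^ t) f := by
          simp_rw [dirichletEnergy, sum_mul, mul_assoc, ← mul_sum]
          exact sum_le_sum fun i _ ↦
            mul_le_mul_of_nonneg_left (displacement i) (h.weight_nonneg i)
      _ ≤ t * dirichletEnergy w P f := h.dirichletEnergy_pow_le f t
      _ ≤ t * ((∑ i, w i) * R ^ 2) := by
          gcongr
          exact h.dirichletEnergy_le hR
      _ = (∑ i, w i) * (t * R ^ 2) := by ring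
  obtain rfl | ht := t.eq_zero_or_pos
  · simpa using sq_nonneg R
  · have ht' : (0 : ℝ) < t := by exact_mod_cast ht
    refine le_of_mul_le_mul_left ?_ ht'
    linarith [le_of_mul_le_mul_left energy hw, mul_pow (t : ℝ) δ 2, sq (t : ℝ)]

end IsReversible

end MarkovType

section Walk

lemma le_mul_of_pow_apply_ne_zero {ι R : Type*} [Fintype ι] [DecidableEq ι] [Semiring R]
    {P : Matrix ι ι R} {ρ : ι → ι → ℕ} {r : ℕ} (hρ_self : ∀ i, ρ i i = 0)
    (hρ_triangle : ∀ i j k, ρ i k ≤ ρ i j + ρ j k) (hP : ∀ i j, P i j ≠ 0 → ρ i j ≤ r) {k : ℕ}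
    {i j : ι} (hij : (P ^ k) i j ≠ 0) : ρ i j ≤ k * r := by
  induction k generalizing j with
  | zero =>
    obtain rfl : i = j := by
      by_contra hne
      exact hij (by rw [pow_zero, one_apply_ne hne])
    simp [hρ_self]
  | succ k ih =>
    rw [pow_succ, mul_apply] at hij
    obtain ⟨l, -, hl⟩ := exists_ne_zero_of_sum_ne_zero hij
    calc ρ i j ≤ ρ i l + ρ l j := hρ_triangle i l j
      _ ≤ k * r + r := add_le_add (ih (left_ne_zero_of_mul hl)) (hP l j (right_ne_zero_of_mul hl))
      _ = (k + 1) * r := (Nat.succ_mul k r).symm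

variable {ι : Type*} [Fintype ι] {κ : ι → ι → ℝ}

/-- The transition matrix of the random walk on `ι` with conductances `κ`. A row of `κ` with zero
sum gives a zero row. -/
noncomputable def walkMatrix (κ : ι → ι → ℝ) : Matrix ι ι ℝ :=
  of fun i j ↦ κ i j / ∑ k, κ i k

lemma ne_zero_of_walkMatrix_ne_zero {i j : ι} (h : walkMatrix κ i j ≠ 0) : κ i j ≠ 0 := by
  contrapose! h
  simp [walkMatrix, h]

lemma isReversible_walkMatrix [DecidableEq ι] (hκ_symm : ∀ i j, κ i j = κ j i)
    (hκ_nonneg : ∀ i j, 0 ≤ κ i j) (hκ_pos : ∀ i, 0 < ∑ k, κ i k) :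
    IsReversible (fun i ↦ ∑ k, κ i k) (walkMatrix κ) where
  weight_nonneg i := (hκ_pos i).le
  mem_rowStochastic := mem_rowStochastic_iff_sum.mpr
    ⟨fun i j ↦ div_nonneg (hκ_nonneg i j) (hκ_pos i).le, fun i ↦ by
      simp only [walkMatrix, of_apply, ← sum_div, div_self (hκ_pos i).ne']⟩
  detailed_balance i j := by
    simp only [walkMatrix, of_apply, mul_div_cancel₀ _ (hκ_pos _).ne', hκ_symm i j]

lemma le_sum_walkMatrix_mul {D : ι → ℝ} {i : ι} {c : ℝ} (hκ_pos : 0 < ∑ k, κ i k)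
    (h : c * ∑ k, κ i k ≤ ∑ j, κ i j * D j) : c ≤ ∑ j, walkMatrix κ i j * D j := by
  simp only [walkMatrix, of_apply, div_mul_eq_mul_div, ← sum_div]
  rwa [le_div_iff₀ hκ_pos]

end Walk

section DenseSubset

variable {V : Type*} {κ : V → V → ℝ}

lemma sum_sum_eq_sum_sum_erase_add [DecidableEq V] (hκ_symm : ∀ u v, κ u v = κ v u) {S : Finset V}
    {u : V} (hu : u ∈ S) :
    ∑ x ∈ S, ∑ y ∈ S, κ x y =
      ∑ x ∈ S.erase u, ∑ y ∈ S.erase u, κ x y + 2 * ∑ y ∈ S, κ u y - κ u u := by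
  have split_row : ∀ x, ∑ y ∈ S, κ x y = κ x u + ∑ y ∈ S.erase u, κ x y :=
    fun x ↦ (add_sum_erase S (κ x) hu).symm
  have column_eq_row : ∑ x ∈ S.erase u, κ x u = ∑ y ∈ S, κ u y - κ u u := by
    simp only [split_row u, add_sub_cancel_left, hκ_symm]
  rw [← add_sum_erase S _ hu, sum_congr rfl fun x _ ↦ split_row x, sum_add_distrib, column_eq_row]
  ring

/-- A subset `S` maximizing `κ(S, S) - 2 M |S|` works. -/
theorem exists_subset_forall_le_sum (hκ_symm : ∀ u v, κ u v = κ v u) (hκ_nonneg : ∀ u, 0 ≤ κ u u)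
    {M : ℝ} {B : Finset V} (hB : 2 * M * #B < ∑ u ∈ B, ∑ v ∈ B, κ u v) :
    ∃ S ⊆ B, S.Nonempty ∧ ∀ u ∈ S, M ≤ ∑ v ∈ S, κ u v := by
  classical
  obtain ⟨S, hSB, hS_max⟩ := exists_max_image B.powerset
    (fun S ↦ ∑ u ∈ S, ∑ v ∈ S, κ u v - 2 * M * #S) ⟨B, mem_powerset_self B⟩
  rw [mem_powerset] at hSB
  refine ⟨S, hSB, ?_, fun u hu ↦ ?_⟩
  · by_contra hS
    have := hS_max B (mem_powerset_self B)
    simp only [not_nonempty_iff_eq_empty.mp hS, sum_empty, card_empty, Nat.cast_zero] at this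
    linarith
  · have hmax := hS_max (S.erase u) (mem_powerset.mpr ((erase_subset u S).trans hSB))
    have hcard : (#S : ℝ) = #(S.erase u) + 1 := by exact_mod_cast (card_erase_add_one hu).symm
    rw [sum_sum_eq_sum_sum_erase_add hκ_symm hu, hcard] at hmax
    linarith [hκ_nonneg u]

end DenseSubset

section Girth

open SimpleGraph

variable {V : Type*} {G : SimpleGraph V} {g : ℕ} {o u p x y y' z : V}

lemma isPath_eq_of_length_add_length_lt (hg : (g : ℕ∞) ≤ G.egirth) {p q : G.Walk x y}
    (hp : p.IsPath) (hq : q.IsPath) (hpq : p.length + q.length < g) : p = q := by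
  by_contra hne
  obtain ⟨_, -, -, c, hc, hc_le⟩ := hp.exists_isCycle_length_le_add_of_ne hq hne
  have : g ≤ c.length := by exact_mod_cast hg.trans (egirth_le_length hc)
  omega

lemma exists_isPath_penultimate_eq (hc : G.Connected) (hzy : G.Adj z y)
    (hdist : G.dist o y ≤ G.dist o z) :
    ∃ p : G.Walk o z, p.IsPath ∧ p.penultimate = y ∧ p.length = G.dist o y + 1 := by
  classical
  obtain ⟨p, hp, hp_length⟩ := hc.exists_path_of_dist o y
  refine ⟨p.concat hzy.symm, hp.concat (fun hz ↦ ?_) hzy.symm, p.penultimate_concat hzy.symm, by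
    rw [p.length_concat, hp_length]⟩
  have hz_before := dist_le (p.takeUntil z hz)
  have hz_after := dist_le (p.dropUntil z hz)
  have hlength := congrArg Walk.length (p.take_spec hz)
  rw [dist_eq_one_iff_adj.mpr hzy] at hz_after
  rw [Walk.length_append] at hlength
  omega

lemma eq_of_adj_of_dist_le (hc : G.Connected) (hg : (g : ℕ∞) ≤ G.egirth) (hy : G.Adj z y)
    (hy' : G.Adj z y') (hzy : G.dist o y ≤ G.dist o z) (hzy' : G.dist o y' ≤ G.dist o z)
    (hlt : G.dist o y + G.dist o y' + 2 < g) : y = y' := by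
  obtain ⟨p, hp, rfl, hp_length⟩ := exists_isPath_penultimate_eq hc hy hzy
  obtain ⟨q, hq, rfl, hq_length⟩ := exists_isPath_penultimate_eq hc hy' hzy'
  rw [isPath_eq_of_length_add_length_lt hg hp hq (by omega)]

lemma exists_adj_dist_add_one_eq (hc : G.Connected) (hyx : y ≠ x) :
    ∃ z, G.Adj y z ∧ G.dist z x + 1 = G.dist y x := by
  obtain ⟨p, hp⟩ := hc.exists_walk_length_eq_dist y x
  cases p with
  | nil => exact absurd rfl hyx
  | @cons _ z _ hyz r =>
    have hzx := dist_le r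
    have htriangle := hyz.reachable.dist_triangle_left x
    rw [dist_eq_one_iff_adj.mpr hyz] at htriangle
    rw [Walk.length_cons] at hp
    exact ⟨z, hyz, by omega⟩

lemma exists_dist_eq_and_dist_eq (hc : G.Connected) {m n : ℕ} (hyx : G.dist y x = m + n) :
    ∃ z, G.dist y z = m ∧ G.dist z x = n := by
  induction m generalizing y with
  | zero => exact ⟨y, dist_self, by omega⟩
  | succ m ih =>
    obtain ⟨y₁, hadj, hy₁x⟩ := exists_adj_dist_add_one_eq hc (y := y) (x := x) (by
      rintro rfl
      rw [SimpleGraph.dist_self] at hyx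
      omega)
    obtain ⟨z, hy₁z, hzx⟩ := ih (y := y₁) (by omega)
    have hle := hadj.reachable.dist_triangle_left z
    rw [dist_eq_one_iff_adj.mpr hadj] at hle
    have hge := hc.dist_triangle (u := y) (v := z) (w := x)
    exact ⟨z, by omega, hzx⟩

/-- Below half the girth, a geodesic whose first step moves away from `o` never turns back. -/
lemma dist_eq_dist_add_dist_of_adj (hc : G.Connected) (hg : (g : ℕ∞) ≤ G.egirth)
    (hyz : G.Adj y z) (hoz : G.dist o z = G.dist o y + 1) (hyx : G.dist y x = G.dist z x + 1)
    (hle : 2 * (G.dist o y + G.dist y x) ≤ g) : G.dist o x = G.dist o y + G.dist y x := by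
  induction hn : G.dist z x generalizing y z with
  | zero =>
    obtain rfl := hc.dist_eq_zero_iff.mp hn
    omega
  | succ n ih =>
    obtain ⟨z', hzz', hz'x⟩ := exists_adj_dist_add_one_eq hc (y := z) (x := x) (by
      rintro rfl
      simp at hn)
    have hoz' : G.dist o z' = G.dist o z + 1 := by
      by_contra hne
      have := hzz'.diff_dist_adj (u := o)
      obtain rfl := eq_of_adj_of_dist_le hc hg (o := o) hyz.symm hzz' (by omega) (by omega)
        (by omega)
      omega
    have := ih hzz' hoz' (by omega) (by omega) (by omega)
    omega

/-- Below half the girth, a geodesic leaving `p` continues at least one of the geodesics `u → p`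
and `o → p`, which meet at `p` in opposite directions. -/
lemma dist_eq_dist_add_dist_or (hc : G.Connected) (hg : (g : ℕ∞) ≤ G.egirth)
    (hp : G.dist u o = G.dist u p + G.dist p o) (hu : 2 * (G.dist u p + G.dist p x) ≤ g)
    (ho : 2 * (G.dist o p + G.dist p x) ≤ g) :
    G.dist u x = G.dist u p + G.dist p x ∨
      G.dist o x = G.dist o p + G.dist p x ∧ G.dist u x + 2 ≤ G.dist u p + G.dist p x := by
  obtain rfl | hpu := eq_or_ne p u
  · simp
  obtain rfl | hpx := eq_or_ne p x
  · simp
  obtain ⟨a, hpa, hau⟩ := exists_adj_dist_add_one_eq hc hpu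
  obtain ⟨b, hpb, hbx⟩ := exists_adj_dist_add_one_eq hc hpx
  rw [SimpleGraph.dist_comm, SimpleGraph.dist_comm (u := p)] at hau
  by_cases hub : G.dist u b = G.dist u p + 1
  · exact .inl (dist_eq_dist_add_dist_of_adj hc hg hpb hub (by omega) hu)
  · have := hpb.diff_dist_adj (u := u)
    obtain rfl : a = b := eq_of_adj_of_dist_le hc hg (o := u) hpa hpb (by omega) (by omega)
      (by omega)
    have hoa : G.dist o a = G.dist o p + 1 := by
      have := hpa.diff_dist_adj (u := o)
      have := hc.dist_triangle (u := u) (v := a) (w := o)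
      rw [SimpleGraph.dist_comm (u := a), SimpleGraph.dist_comm (u := p) (v := o)] at *
      omega
    have := hc.dist_triangle (u := u) (v := a) (w := x)
    exact .inr ⟨dist_eq_dist_add_dist_of_adj hc hg hpa hoa (by omega) ho, by omega⟩

lemma exists_forall_dist_eq_or_le (hc : G.Connected) (hg : (g : ℕ∞) ≤ G.egirth) {h j : ℕ}
    (hjh : j ≤ h) (hou : 2 * (G.dist o u + h) ≤ g) (hh : 6 * h ≤ g) :
    ∃ p, ∀ x, G.dist u x = h →
      G.dist p x = h - j ∨ G.dist o u + h + 2 ≤ G.dist o x + 2 * j := by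
  have hcomm := fun a b ↦ SimpleGraph.dist_comm (G := G) (u := a) (v := b)
  obtain hlt | hle := lt_or_ge (G.dist o u) j
  · refine ⟨o, fun x hx ↦ .inr ?_⟩
    have := hc.dist_triangle (u := u) (v := o) (w := x)
    have := hcomm u o
    omega
  · obtain ⟨p, hup, hpo⟩ := exists_dist_eq_and_dist_eq hc (y := u) (x := o) (m := j)
      (n := G.dist o u - j) (by have := hcomm u o; omega)
    refine ⟨p, fun x hx ↦ ?_⟩
    have := hc.dist_triangle (u := p) (v := u) (w := x)
    have := hcomm p u
    have := hcomm p o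
    have := hcomm u o
    have := dist_eq_dist_add_dist_or hc hg (u := u) (o := o) (p := p) (x := x) (by omega)
      (by omega) (by omega)
    omega

end Girth

section Sphere

open SimpleGraph

variable {V : Type*} [Fintype V] {G : SimpleGraph V} {g q h k : ℕ} {u x : V}

/-- The set of vertices of `G` at distance exactly `h` from `u`. -/
noncomputable def sphere (G : SimpleGraph V) (h : ℕ) (u : V) : Finset V := {x | G.dist u x = h}

lemma mem_sphere : x ∈ sphere G h u ↔ G.dist u x = h := by
  simp [sphere]

lemma sphere_zero (hc : G.Connected) (u : V) : sphere G 0 u = {u} := by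
  ext x
  rw [mem_sphere, hc.dist_eq_zero_iff, mem_singleton, eq_comm]

variable [DecidableRel G.Adj]

lemma sphere_one (u : V) : sphere G 1 u = G.neighborFinset u := by
  ext x
  rw [mem_sphere, dist_eq_one_iff_adj, mem_neighborFinset]

lemma card_sphere_add_two_le (hc : G.Connected) (hdeg : ∀ v, G.degree v ≤ q + 1) (k : ℕ) (u : V) :
    #(sphere G (k + 2) u) ≤ #(sphere G (k + 1) u) * q := by
  have hfew : ∀ z ∈ sphere G (k + 1) u, #(bipartiteAbove G.Adj (sphere G (k + 2) u) z) ≤ q := by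
    classical
    intro z hz
    rw [mem_sphere, SimpleGraph.dist_comm] at hz
    obtain ⟨y, hzy, hyu⟩ := exists_adj_dist_add_one_eq hc (y := z) (x := u) (by
      rintro rfl
      simp at hz)
    have hsub : bipartiteAbove G.Adj (sphere G (k + 2) u) z ⊆ (G.neighborFinset z).erase y := by
      intro x hx
      rw [mem_bipartiteAbove, mem_sphere, SimpleGraph.dist_comm] at hx
      exact mem_erase.mpr ⟨by rintro rfl; omega, (G.mem_neighborFinset z x).mpr hx.2⟩
    have hcard := card_le_card hsub
    rw [card_erase_of_mem ((G.mem_neighborFinset z y).mpr hzy), card_neighborFinset_eq_degree]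
      at hcard
    have := hdeg z
    omega
  have hparent : ∀ x ∈ sphere G (k + 2) u,
      1 ≤ #(bipartiteBelow G.Adj (sphere G (k + 1) u) x) := by
    intro x hx
    rw [mem_sphere, SimpleGraph.dist_comm] at hx
    obtain ⟨z, hxz, hzu⟩ := exists_adj_dist_add_one_eq hc (y := x) (x := u) (by
      rintro rfl
      simp at hx)
    refine card_pos.mpr ⟨z, ?_⟩
    rw [mem_bipartiteBelow, mem_sphere, SimpleGraph.dist_comm]
    exact ⟨by omega, hxz.symm⟩
  simpa using card_mul_le_card_mul' G.Adj hparent hfew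

lemma card_sphere_le (hc : G.Connected) (hq : 1 ≤ q) (hdeg : ∀ v, G.degree v ≤ q + 1) (k : ℕ)
    (u : V) : #(sphere G k u) ≤ 2 * q ^ k := by
  induction k using Nat.twoStepInduction with
  | zero => simp [sphere_zero hc]
  | one =>
    have := hdeg u
    rw [sphere_one, card_neighborFinset_eq_degree, pow_one]
    omega
  | more k _ ih =>
    calc #(sphere G (k + 2) u) ≤ #(sphere G (k + 1) u) * q := card_sphere_add_two_le hc hdeg k u
      _ ≤ 2 * q ^ (k + 1) * q := Nat.mul_le_mul_right q ih
      _ = 2 * q ^ (k + 2) := by ring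

lemma card_sphere_mul_le (hc : G.Connected) (hg : (g : ℕ∞) ≤ G.egirth)
    (hdeg : ∀ v, q + 1 ≤ G.degree v) (hk : 2 * k + 3 < g) (u : V) :
    #(sphere G k u) * q ≤ #(sphere G (k + 1) u) := by
  have hmany : ∀ z ∈ sphere G k u, q ≤ #(bipartiteAbove G.Adj (sphere G (k + 1) u) z) := by
    classical
    intro z hz
    rw [mem_sphere] at hz
    have hinward : #{y ∈ G.neighborFinset z | G.dist u y ≤ k} ≤ 1 := by
      rw [card_le_one]
      intro y hy y' hy'
      rw [mem_filter, mem_neighborFinset] at hy hy'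
      exact eq_of_adj_of_dist_le hc hg hy.1 hy'.1 (hz ▸ hy.2) (hz ▸ hy'.2) (by omega)
    have houtward : {y ∈ G.neighborFinset z | ¬ G.dist u y ≤ k} ⊆
        bipartiteAbove G.Adj (sphere G (k + 1) u) z := by
      intro y hy
      rw [mem_filter, mem_neighborFinset] at hy
      have := hy.1.diff_dist_adj (u := u)
      rw [mem_bipartiteAbove, mem_sphere]
      exact ⟨by omega, hy.1⟩
    have hsplit := card_filter_add_card_filter_not (s := G.neighborFinset z) (G.dist u · ≤ k)
    rw [card_neighborFinset_eq_degree] at hsplit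
    have := card_le_card houtward
    have := hdeg z
    omega
  have hparent_unique : ∀ x ∈ sphere G (k + 1) u,
      #(bipartiteBelow G.Adj (sphere G k u) x) ≤ 1 := by
    intro x hx
    rw [mem_sphere] at hx
    rw [card_le_one]
    intro z hz z' hz'
    rw [mem_bipartiteBelow, mem_sphere] at hz hz'
    exact eq_of_adj_of_dist_le hc hg (o := u) hz.2.symm hz'.2.symm (by omega) (by omega) (by omega)
  simpa using card_mul_le_card_mul G.Adj hmany hparent_unique

lemma pow_le_card_sphere (hc : G.Connected) (hg : (g : ℕ∞) ≤ G.egirth)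
    (hdeg : ∀ v, q + 1 ≤ G.degree v) (hk : 2 * k + 1 < g) (u : V) : q ^ k ≤ #(sphere G k u) := by
  induction k with
  | zero => simp [sphere_zero hc]
  | succ k ih =>
    calc q ^ (k + 1) = q ^ k * q := pow_succ q k
      _ ≤ #(sphere G k u) * q := Nat.mul_le_mul_right q (ih (by omega))
      _ ≤ #(sphere G (k + 1) u) := card_sphere_mul_le hc hg hdeg (by omega) u

end Sphere

section TwoStepWalk

lemma mul_card_sub_le_sum {ι : Type*} {T : Finset ι} {p : ι → Prop} [DecidablePred p] {φ : ι → ℝ}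
    {a b : ℝ} (hφ : ∀ i ∈ T, a - b ≤ φ i) (hφ' : ∀ i ∈ T, ¬ p i → a ≤ φ i) :
    a * #T - b * #{i ∈ T | p i} ≤ ∑ i ∈ T, φ i :=
  calc a * #T - b * #{i ∈ T | p i} = ∑ i ∈ T, (a - if p i then b else 0) := by
        rw [sum_sub_distrib, ← sum_filter, sum_const, sum_const, nsmul_eq_mul, nsmul_eq_mul,
          mul_comm a, mul_comm b]
    _ ≤ ∑ i ∈ T, φ i := sum_le_sum fun i hi ↦ by
        split_ifs with hp
        · exact hφ i hi
        · simpa using hφ' i hi hp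

open SimpleGraph

variable {V : Type*} [Fintype V] {G : SimpleGraph V} {g q h j : ℕ} {o u v x y : V}

/-- The number of ways to go from `u` to `v` in two jumps of length exactly `h`. -/
noncomputable def twoStepKernel (G : SimpleGraph V) (h : ℕ) (u v : V) : ℕ :=
  #{x | G.dist u x = h ∧ G.dist x v = h}

/-- The two-jump trajectories `⟨x, v⟩`, with jumps of length `h`, that start at `u` and end at a
point `v` of `S`. -/
noncomputable def twoSteps (G : SimpleGraph V) (h : ℕ) (u : V) (S : Finset V) :
    Finset (Σ _ : V, V) :=
  (sphere G h u).sigma fun x ↦ {v ∈ S | G.dist x v = h}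

lemma twoStepKernel_comm (G : SimpleGraph V) (h : ℕ) (u v : V) :
    twoStepKernel G h u v = twoStepKernel G h v u := by
  simp only [twoStepKernel, and_comm, SimpleGraph.dist_comm]

lemma dist_le_of_twoStepKernel_ne_zero (hc : G.Connected) (huv : twoStepKernel G h u v ≠ 0) :
    G.dist u v ≤ 2 * h := by
  obtain ⟨x, hx⟩ := card_ne_zero.mp huv
  obtain ⟨hux, hxv⟩ := (mem_filter.mp hx).2
  have := hc.dist_triangle (u := u) (v := x) (w := v)
  omega

lemma sum_twoStepKernel_mul (G : SimpleGraph V) (h : ℕ) (u : V) (S : Finset V) (φ : V → ℝ) :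
    ∑ v ∈ S, twoStepKernel G h u v * φ v = ∑ e ∈ twoSteps G h u S, φ e.2 := by
  simp only [twoStepKernel, twoSteps, sphere, sum_sigma, sum_filter, card_filter, Nat.cast_sum,
    sum_mul, ite_and, Nat.cast_ite, Nat.cast_one, Nat.cast_zero, ite_mul, one_mul, zero_mul]
  rw [sum_comm]
  refine sum_congr rfl fun x _ ↦ ?_
  split_ifs <;> simp

lemma dist_le_of_mem_twoSteps (hc : G.Connected) {S : Finset V} {e : Σ _ : V, V}
    (he : e ∈ twoSteps G h u S) : G.dist o u ≤ G.dist o e.2 + 2 * h := by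
  simp only [twoSteps, mem_sigma, mem_sphere, mem_filter] at he
  have := hc.dist_triangle (u := o) (v := e.2) (w := u)
  have := hc.dist_triangle (u := u) (v := e.1) (w := e.2)
  have := SimpleGraph.dist_comm (G := G) (u := e.2) (v := u)
  omega

lemma sum_sum_twoStepKernel (G : SimpleGraph V) (h : ℕ) (B : Finset V) :
    ∑ u ∈ B, ∑ v ∈ B, twoStepKernel G h u v = ∑ x, #{u ∈ B | G.dist u x = h} ^ 2 := by
  have hpairs : ∀ x, #{u ∈ B | G.dist u x = h} ^ 2 =
      ∑ u ∈ B, ∑ v ∈ B, if G.dist u x = h ∧ G.dist x v = h then 1 else 0 := fun x ↦ by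
    simp only [sq, card_filter, sum_mul_sum, ite_and, SimpleGraph.dist_comm, ite_mul, one_mul,
      zero_mul]
  simp_rw [hpairs, twoStepKernel, card_filter]
  rw [sum_congr rfl fun u _ ↦ sum_comm, sum_comm]

lemma sq_card_mul_pow_le [DecidableRel G.Adj] (hc : G.Connected) (hg : (g : ℕ∞) ≤ G.egirth)
    (hdeg : ∀ v, q + 1 ≤ G.degree v) (hh : 2 * h + 1 < g) (B : Finset V) :
    (#B * q ^ h) ^ 2 ≤ Fintype.card V * ∑ u ∈ B, ∑ v ∈ B, twoStepKernel G h u v := by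
  have hcount : #B * q ^ h ≤ ∑ x, #{u ∈ B | G.dist u x = h} :=
    calc #B * q ^ h ≤ ∑ u ∈ B, #(sphere G h u) := by
          rw [← smul_eq_mul]
          exact card_nsmul_le_sum _ _ _ fun u _ ↦ pow_le_card_sphere hc hg hdeg hh u
      _ = ∑ x, #{u ∈ B | G.dist u x = h} :=
          sum_card_bipartiteAbove_eq_sum_card_bipartiteBelow fun u x ↦ G.dist u x = h
  calc (#B * q ^ h) ^ 2 ≤ (∑ x, #{u ∈ B | G.dist u x = h}) ^ 2 := Nat.pow_le_pow_left hcount 2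
    _ ≤ Fintype.card V * ∑ x, #{u ∈ B | G.dist u x = h} ^ 2 := sq_sum_le_card_mul_sum_sq
    _ = Fintype.card V * ∑ u ∈ B, ∑ v ∈ B, twoStepKernel G h u v := by
        rw [sum_sum_twoStepKernel]

/-- The end points of the jumps of length `h` from `y` that spend at least `j` of their steps going
towards `o`. -/
noncomputable def backtracking (G : SimpleGraph V) (o : V) (h j : ℕ) (y : V) : Finset V :=
  {x ∈ sphere G h y | G.dist o x + 2 * j < G.dist o y + h + 2}

lemma dist_add_le_of_notMem_backtracking (hx : G.dist y x = h)
    (hback : x ∉ backtracking G o h j y) : G.dist o y + h + 2 ≤ G.dist o x + 2 * j := by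
  simp only [backtracking, mem_filter, mem_sphere, hx, true_and, not_lt] at hback
  exact hback

variable [DecidableRel G.Adj]

lemma card_backtracking_le (hc : G.Connected) (hg : (g : ℕ∞) ≤ G.egirth) (hq : 1 ≤ q)
    (hdeg : ∀ v, G.degree v ≤ q + 1) (hjh : j ≤ h) (hoy : 2 * (G.dist o y + h) ≤ g)
    (hh : 6 * h ≤ g) : #(backtracking G o h j y) ≤ 2 * q ^ (h - j) := by
  obtain ⟨p, hp⟩ := exists_forall_dist_eq_or_le hc hg hjh hoy hh
  have hsub : backtracking G o h j y ⊆ sphere G (h - j) p := by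
    intro x hx
    rw [backtracking, mem_filter, mem_sphere] at hx
    exact mem_sphere.mpr ((hp x hx.1).resolve_right (by omega))
  exact (card_le_card hsub).trans (card_sphere_le hc hq hdeg _ p)

lemma card_filter_twoSteps_le (hc : G.Connected) (hg : (g : ℕ∞) ≤ G.egirth) (hq : 1 ≤ q)
    (hdeg : ∀ v, G.degree v ≤ q + 1) (hjh : j ≤ h) (hj : 8 * j ≤ h + 8)
    (hou : 2 * (G.dist o u + 2 * h) ≤ g) (hh : 6 * h ≤ g) (S : Finset V) :
    #{e ∈ twoSteps G h u S | 2 * G.dist o e.2 < 2 * G.dist o u + 3 * h} ≤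
      8 * q ^ (2 * h - j) := by
  classical
  have hsub : {e ∈ twoSteps G h u S | 2 * G.dist o e.2 < 2 * G.dist o u + 3 * h} ⊆
      (backtracking G o h j u).sigma (sphere G h) ∪
        (sphere G h u).sigma (backtracking G o h j) := by
    rintro ⟨x, v⟩ he
    simp only [twoSteps, mem_filter, mem_sigma, mem_sphere] at he
    simp only [mem_union, mem_sigma, mem_sphere]
    obtain ⟨⟨hux, -, hxv⟩, hback⟩ := he
    by_contra! hnot
    have := dist_add_le_of_notMem_backtracking hux (hnot.1 · hxv)
    have := dist_add_le_of_notMem_backtracking hxv (hnot.2 hux)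
    omega
  have hdist : ∀ x ∈ sphere G h u, 2 * (G.dist o x + h) ≤ g := by
    intro x hx
    rw [mem_sphere] at hx
    have := hc.dist_triangle (u := o) (v := u) (w := x)
    omega
  have hfirst : #((backtracking G o h j u).sigma (sphere G h)) ≤
      2 * q ^ (h - j) * (2 * q ^ h) := by
    rw [card_sigma]
    refine (sum_le_card_nsmul _ _ _ fun x _ ↦ card_sphere_le hc hq hdeg h x).trans ?_
    exact Nat.mul_le_mul_right _ (card_backtracking_le hc hg hq hdeg hjh (by omega) hh)
  have hsecond : #((sphere G h u).sigma (backtracking G o h j)) ≤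
      2 * q ^ h * (2 * q ^ (h - j)) := by
    rw [card_sigma]
    refine (sum_le_card_nsmul _ _ _ fun x hx ↦
      card_backtracking_le hc hg hq hdeg hjh (hdist x hx) hh).trans ?_
    exact Nat.mul_le_mul_right _ (card_sphere_le hc hq hdeg h u)
  have hpow : q ^ (2 * h - j) = q ^ h * q ^ (h - j) := by
    rw [← pow_add]
    congr 1
    omega
  have := (card_le_card hsub).trans (card_union_le _ _)
  linarith

theorem mul_sum_twoStepKernel_le (hc : G.Connected) (hg : (g : ℕ∞) ≤ G.egirth) (hq : 1 ≤ q)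
    (hdeg : ∀ v, G.degree v ≤ q + 1) (hjh : j ≤ h) (hj : 8 * j ≤ h + 8)
    (hou : 2 * (G.dist o u + 2 * h) ≤ g) (hh : 6 * h ≤ g) {S : Finset V}
    (hS : 56 * (q : ℝ) ^ (2 * h - j) ≤ ∑ v ∈ S, (twoStepKernel G h u v : ℝ)) :
    (G.dist o u + h : ℝ) * ∑ v ∈ S, (twoStepKernel G h u v : ℝ) ≤
      ∑ v ∈ S, twoStepKernel G h u v * (G.dist o v : ℝ) := by
  set T := twoSteps G h u S
  set bad := {e ∈ T | 2 * G.dist o e.2 < 2 * G.dist o u + 3 * h}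
  have hcard : ∑ v ∈ S, (twoStepKernel G h u v : ℝ) = #T := by
    simpa using sum_twoStepKernel_mul G h u S 1
  have hbad : (#bad : ℝ) ≤ 8 * q ^ (2 * h - j) := by
    exact_mod_cast card_filter_twoSteps_le hc hg hq hdeg hjh hj hou hh S
  -- At most one trajectory in seven is bad. A bad one loses at most `2h`, the others gain `3h / 2`.
  have hsum : (G.dist o u + 3 / 2 * h : ℝ) * #T - 7 / 2 * h * #bad ≤ ∑ e ∈ T, (G.dist o e.2 : ℝ) :=
    mul_card_sub_le_sum
      (fun e he ↦ by
        have := dist_le_of_mem_twoSteps hc (o := o) he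
        have : (G.dist o u : ℝ) ≤ G.dist o e.2 + 2 * h := by exact_mod_cast this
        linarith)
      (fun e _ hgood ↦ by
        have : (2 * G.dist o u + 3 * h : ℝ) ≤ 2 * G.dist o e.2 := by exact_mod_cast not_lt.mp hgood
        linarith)
  rw [sum_twoStepKernel_mul, hcard]
  nlinarith [Nat.cast_nonneg (α := ℝ) h]

end TwoStepWalk
section Drift

open SimpleGraph

variable {V : Type*} [Fintype V] {G : SimpleGraph V} [DecidableRel G.Adj] {g q h j t : ℕ}

lemma exists_subset_forall_le_sum_twoStepKernel (hc : G.Connected) (hg : (g : ℕ∞) ≤ G.egirth)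
    (hq : 1 ≤ q) (hdeg : ∀ v, q + 1 ≤ G.degree v) (hj : j ≤ 2 * h) (hh : 2 * h + 1 < g) {M : ℝ}
    (hM : 0 ≤ M) {B : Finset V} (hB : 2 * M * Fintype.card V < #B * (q : ℝ) ^ j) :
    ∃ S ⊆ B, S.Nonempty ∧
      ∀ u ∈ S, M * (q : ℝ) ^ (2 * h - j) ≤ ∑ v ∈ S, (twoStepKernel G h u v : ℝ) := by
  refine exists_subset_forall_le_sum (κ := fun u v ↦ (twoStepKernel G h u v : ℝ))
    (fun u v ↦ by simp only [twoStepKernel_comm]) (fun u ↦ Nat.cast_nonneg _) ?_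
  have hn : (0 : ℝ) < Fintype.card V := by
    exact_mod_cast Fintype.card_pos_iff.mpr hc.nonempty
  have hB_pos : (0 : ℝ) < #B := by
    have : 0 < #B * (q : ℝ) ^ j := (by positivity : 0 ≤ 2 * M * Fintype.card V).trans_lt hB
    exact pos_of_mul_pos_left this (by positivity)
  refine lt_of_mul_lt_mul_left ?_ hn.le
  calc (Fintype.card V : ℝ) * (2 * (M * q ^ (2 * h - j)) * #B)
      = 2 * M * Fintype.card V * (#B * q ^ (2 * h - j)) := by ring
    _ < #B * q ^ j * (#B * q ^ (2 * h - j)) := by gcongr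
    _ = (#B * q ^ h) ^ 2 := by
        rw [mul_pow, ← pow_mul, mul_comm h 2, ← Nat.add_sub_cancel' hj, pow_add,
          Nat.add_sub_cancel' hj]
        ring
    _ ≤ Fintype.card V * ∑ u ∈ B, ∑ v ∈ B, (twoStepKernel G h u v : ℝ) := by
        exact_mod_cast sq_card_mul_pow_le hc hg hdeg hh B

variable {E : Type*} [NormedAddCommGroup E] [InnerProductSpace ℝ E]

/-- The two-jump walk on `S` moves away from its starting point at speed `h` for the first `t`
steps, whereas Markov type 2 only allows a displacement of order `α h √t`. -/
theorem le_four_mul_sq_of_forall_le_sum_twoStepKernel (hc : G.Connected)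
    (hg : (g : ℕ∞) ≤ G.egirth) (hq : 1 ≤ q) (hdeg : ∀ v, G.degree v ≤ q + 1) (hh : 1 ≤ h)
    (hjh : j ≤ h) (hj : 8 * j ≤ h + 8) (ht : 2 ≤ t) (htg : 4 * h * t ≤ g) {S : Finset V}
    (hS_nonempty : S.Nonempty)
    (hS : ∀ u ∈ S, 56 * (q : ℝ) ^ (2 * h - j) ≤ ∑ v ∈ S, (twoStepKernel G h u v : ℝ)) {f : V → E}
    {s α : ℝ} (hs : 0 < s) (hα : 0 ≤ α)
    (hf : ∀ u ∈ S, ∀ v ∈ S, s * G.dist u v ≤ ‖f u - f v‖ ∧ ‖f u - f v‖ ≤ α * s * G.dist u v) :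
    t ≤ 4 * α ^ 2 := by
  classical
  set κ : S → S → ℝ := fun u v ↦ twoStepKernel G h u v
  have hκ_sum : ∀ u : S, ∑ v, κ u v = ∑ v ∈ S, (twoStepKernel G h u v : ℝ) := fun u ↦
    sum_coe_sort S fun v ↦ (twoStepKernel G h u v : ℝ)
  have hκ_pos : ∀ u : S, 0 < ∑ v, κ u v := fun u ↦
    (by positivity : (0 : ℝ) < 56 * q ^ (2 * h - j)).trans_le (hκ_sum u ▸ hS u u.2)
  have hκ_supp : ∀ u v : S, walkMatrix κ u v ≠ 0 → G.dist (u : V) v ≤ 2 * h := fun u v huv ↦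
    dist_le_of_twoStepKernel_ne_zero hc (Nat.cast_ne_zero.mp (ne_zero_of_walkMatrix_ne_zero huv))
  have hreversible : IsReversible _ (walkMatrix κ) := isReversible_walkMatrix
    (fun u v ↦ by simp only [κ, twoStepKernel_comm]) (fun u v ↦ Nat.cast_nonneg _) hκ_pos
  have hdrift : ∀ o : S, ∀ k < t, ∀ u, (walkMatrix κ ^ k) o u ≠ 0 →
      s * G.dist (o : V) u + s * h ≤ ∑ v, walkMatrix κ u v * (s * G.dist (o : V) v) := by
    intro o k hk u hou
    have hdist : G.dist (o : V) u ≤ k * (2 * h) :=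
      le_mul_of_pow_apply_ne_zero (ρ := fun u v : S ↦ G.dist (u : V) v) (fun _ ↦ dist_self)
        (fun _ _ _ ↦ hc.dist_triangle) hκ_supp hou
    have hspeed := le_sum_walkMatrix_mul (D := fun v : S ↦ (G.dist (o : V) v : ℝ)) (hκ_pos u) (by
      rw [hκ_sum, sum_coe_sort S fun v ↦ (twoStepKernel G h u v : ℝ) * G.dist (o : V) v]
      exact mul_sum_twoStepKernel_le hc hg hq hdeg hjh hj (by nlinarith) (by nlinarith) (hS u u.2))
    simp_rw [mul_left_comm _ s, ← mul_sum, ← mul_add]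
    exact mul_le_mul_of_nonneg_left hspeed hs.le
  have hdiffusive : t * (s * h) ^ 2 ≤ (α * s * (2 * h)) ^ 2 :=
    hreversible.mul_sq_le_sq_of_drift (f := fun u : S ↦ f u)
      (D := fun u v ↦ s * G.dist (u : V) v)
      (sum_pos (fun u _ ↦ hκ_pos u) (univ_nonempty_iff.mpr hS_nonempty.to_subtype))
      (by positivity) (fun o ↦ by simp)
      (fun u v ↦ by rw [abs_of_nonneg (by positivity)]; exact (hf u u.2 v v.2).1)
      (fun u v huv ↦ (hf u u.2 v v.2).2.trans (by
        have : (G.dist (u : V) v : ℝ) ≤ 2 * h := by exact_mod_cast hκ_supp u v huv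
        gcongr))
      hdrift
  refine le_of_mul_le_mul_right (hdiffusive.trans_eq (by ring)) (by positivity : 0 < (s * h) ^ 2)

theorem card_mul_pow_le_of_embedding (hc : G.Connected) (hg : (g : ℕ∞) ≤ G.egirth) (hq : 1 ≤ q)
    (hG : G.IsRegularOfDegree (q + 1)) (hh : 1 ≤ h) (hjh : j ≤ h) (hj : 8 * j ≤ h + 8)
    (htg : 4 * h * t ≤ g) {α : ℝ} (hα : 1 ≤ α) (hαt : 4 * α ^ 2 < t) {B : Finset V} {f : V → E}
    {s : ℝ} (hs : 0 < s)
    (hf : ∀ u ∈ B, ∀ v ∈ B, s * G.dist u v ≤ ‖f u - f v‖ ∧ ‖f u - f v‖ ≤ α * s * G.dist u v) :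
    #B * (q : ℝ) ^ j ≤ 112 * Fintype.card V := by
  have ht : 4 < t := by
    have : (4 : ℝ) < t := by nlinarith
    exact_mod_cast this
  by_contra! hB
  obtain ⟨S, hSB, hS_nonempty, hS⟩ := exists_subset_forall_le_sum_twoStepKernel hc hg hq
    (fun v ↦ (hG v).ge) (by omega : j ≤ 2 * h) (by nlinarith) (by norm_num : (0 : ℝ) ≤ 56)
    (by linarith)
  have := le_four_mul_sq_of_forall_le_sum_twoStepKernel hc hg hq (fun v ↦ (hG v).le) hh hjh hj
    (by omega) htg hS_nonempty hS hs (by linarith) fun u hu v hv ↦ hf u (hSB hu) v (hSB hv)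
  linarith

end Drift

section Parameters

lemma exists_walk_parameters {g : ℕ} {α : ℝ} (hα : 1 ≤ α) (hg : 20 * α ^ 2 ≤ g) :
    ∃ h j t : ℕ, 1 ≤ h ∧ j ≤ h ∧ 8 * j ≤ h + 8 ∧ 4 * h * t ≤ g ∧ 4 * α ^ 2 < t ∧
      g / (160 * α ^ 2) ≤ j := by
  have hα_sq : 1 ≤ α ^ 2 := one_le_pow₀ hα
  set K : ℝ := g / (20 * α ^ 2)
  have hK : K * (20 * α ^ 2) = g := div_mul_cancel₀ _ (by positivity)
  have hK_one : 1 ≤ K := (one_le_div (by positivity)).mpr hg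
  set h := ⌊K⌋₊
  have hh : 1 ≤ h := Nat.one_le_floor_iff K |>.mpr hK_one
  have hhK : h ≤ K := Nat.floor_le (by positivity)
  have hKh : K < h + 1 := Nat.lt_floor_add_one K
  have ht : (g : ℝ) < 4 * h * ((g / (4 * h) : ℕ) + 1) := by
    exact_mod_cast Nat.lt_mul_div_succ g (by omega : 0 < 4 * h)
  have hj : (h + 1 : ℝ) ≤ 8 * (h / 8 + 1 : ℕ) := by
    norm_cast
    omega
  refine ⟨h, h / 8 + 1, g / (4 * h), hh, by omega, by omega, Nat.mul_div_le g _, ?_, ?_⟩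
  · have hh' : (0 : ℝ) < 4 * h := by positivity
    have : 4 * h * (5 * α ^ 2) < 4 * h * ((g / (4 * h) : ℕ) + 1 : ℝ) := by nlinarith
    linarith [lt_of_mul_lt_mul_left this hh'.le]
  · have : g / (160 * α ^ 2) = K / 8 := by
      simp only [K]
      ring
    linarith

end Parameters

end GirthRamsey

open Finset GirthRamsey in
theorem girth_ramsey_upper_general {V E : Type*} [Fintype V] [NormedAddCommGroup E]
    [InnerProductSpace ℝ E] {G : SimpleGraph V} [DecidableRel G.Adj] {d g : ℕ} {α : ℝ}
    (hc : G.Connected) (hd : 2 ≤ d) (hG : G.IsRegularOfDegree d) (hg : (g : ℕ∞) ≤ G.egirth)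
    (hα : 1 ≤ α) (hαg : 20 * α ^ 2 ≤ g) {B : Finset V} {f : V → E} {s : ℝ} (hs : 0 < s)
    (hf : ∀ u ∈ B, ∀ v ∈ B,
      s * G.dist u v ≤ ‖f u - f v‖ ∧ ‖f u - f v‖ ≤ α * s * G.dist u v) :
    (#B : ℝ) ≤ 112 * ((d : ℝ) - 1) ^ (-(1 / 160 * g / α ^ 2)) * Fintype.card V := by
  obtain ⟨q, rfl⟩ : ∃ q, d = q + 1 := ⟨d - 1, by omega⟩
  obtain ⟨h, j, t, hh, hjh, hj, htg, hαt, hgj⟩ := exists_walk_parameters hα hαg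
  have hq : (1 : ℝ) ≤ q := by exact_mod_cast (by omega : 1 ≤ q)
  have hcard : #B * (q : ℝ) ^ j ≤ 112 * Fintype.card V :=
    card_mul_pow_le_of_embedding hc hg (by omega) hG hh hjh hj htg hα hαt hs hf
  have hexponent : ((q : ℝ) ^ j)⁻¹ ≤ q ^ (-(1 / 160 * g / α ^ 2)) := by
    rw [← Real.rpow_natCast, ← Real.rpow_neg (by positivity)]
    refine Real.rpow_le_rpow_of_exponent_le hq (neg_le_neg (le_of_eq_of_le ?_ hgj))
    ring
  calc (#B : ℝ) ≤ 112 * ((q : ℝ) ^ j)⁻¹ * Fintype.card V := by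
        rw [mul_right_comm, ← div_eq_mul_inv]
        exact (le_div_iff₀ (by positivity)).mpr hcard
    _ ≤ 112 * (((q + 1 : ℕ) : ℝ) - 1) ^ (-(1 / 160 * g / α ^ 2)) * Fintype.card V := by
        rw [Nat.cast_succ, add_sub_cancel_right]
        gcongr

/-- The metric Ramsey problem for graphs of large girth: every subset of a
`d`-regular graph of girth at least `g` that `α`-embeds into `ℓ₂`
(for `1 ≤ α < √g/6`) has at most `C·(d-1)^(-c·g/α²)·|V|` points. -/
theorem girth_ramsey_upper :
    ∃ c C : ℝ, 0 < c ∧ 0 < C ∧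
      ∀ (V : Type) [Fintype V] [DecidableEq V] (G : SimpleGraph V) [DecidableRel G.Adj]
        (d g : ℕ) (α : ℝ),
        G.Connected → 3 ≤ d → G.IsRegularOfDegree d → 0 < g → (g : ℕ∞) ≤ G.girth →
        1 ≤ α → α < Real.sqrt g / 6 →
        ∀ B : Finset V,
          (∃ f : V → lp (fun _ : ℕ => ℝ) 2, ∃ s : ℝ, 0 < s ∧
            ∀ u ∈ B, ∀ v ∈ B,
              s * (G.dist u v : ℝ) ≤ ‖f u - f v‖ ∧
                ‖f u - f v‖ ≤ α * s * (G.dist u v : ℝ)) →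
          (B.card : ℝ) ≤
            C * ((d : ℝ) - 1) ^ (-(c * g / α ^ 2)) * (Fintype.card V : ℝ) := by
  refine ⟨1 / 160, 112, by norm_num, by norm_num, ?_⟩
  rintro V _ _ G _ d g α hc hd hG - hg hα hαg B ⟨f, s, hs, hf⟩
  have hαg' : (6 * α) ^ 2 < g := (Real.lt_sqrt (by positivity)).mp (by linarith)
  exact girth_ramsey_upper_general hc (by omega) hG (hg.trans (ENat.natCast_toNat_le_self _)) hα
    (by nlinarith) hs hf
end

section
/- Let G = (V,E) be a finite simple graph with maximal degree at most Δ (Δ ≥ 1), let p ≥ 1 be real, and let A > 0 be a constant such that for every f : V → ℝ one has Σ_{(u,v) ∈ V×V} |f(u) − f(v)|^p ≤ (Ap)^p·(|V|/Δ)·Σ_{{u,v} ∈ E} |f(u) − f(v)|^p (the left sum over all ordered pairs of vertices, the right sum over edges, each counted once). Then: (i) for every real q with 1 ≤ q ≤ p and every f : V → ℓ_q, Σ_{(u,v) ∈ V×V} ‖f(u) − f(v)‖_q^q ≤ (Ap)^p·(|V|/Δ)·Σ_{{u,v} ∈ E} ‖f(u) − f(v)‖_q^q; and (ii) for every real q with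 p < q < ∞ and every f : V → ℓ_q, Σ_{(u,v) ∈ V×V} ‖f(u) − f(v)‖_q^q ≤ (4Aq)^q·(|V|/Δ)·Σ_{{u,v} ∈ E} ‖f(u) − f(v)‖_q^q. -/
/-!
Both ranges of exponents use the signed power `ψ_a(x) = x|x|^(a-1)`.

For `q < p` and `a = (q - 1) / p`, translation and scaling invariance of Lebesgue measure give
`∫ |ψ_a(x - t) - ψ_a(y - t)|^p dt = C |x - y|^q` with `0 < C < ∞`, so integrating the `p`-inequality
for `u ↦ ψ_a(f u - t)` over `t` yields the `q`-inequality with the same constant.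

For `q > p` and `s = q / p`, translate `f` so that `g = ψ_s ∘ f` has mean zero. By Jensen,
`|V| ∑ |f u|^q = |V| ∑ |g u|^p` is at most the left side of the `p`-inequality for `g`. On an edge,
`|g u - g v| ≤ s |f u - f v| max(|f u|, |f v|)^(s-1)`, and Hölder together with the degree bound
controls the right side by a product of powers of the `q`-energy of `f` and of `Δ ∑ |f u|^q`. The
latter is absorbed into the left side. Convexity of `|x|^q` at the end gives the constant
`(2Aq)^q`, slightly better than `(4Aq)^q`.

Summing over coordinates passes from real-valued to `ℓ_q`-valued functions.
-/

open Finset MeasureTheory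

section Energy

variable {V E : Type*} [Fintype V] [Norm E] [Sub E]

/-- The `q`-energy `∑ ‖f u - f v‖ ^ q` of `f` over all ordered pairs of vertices. Only a norm and a
subtraction are required of `E`, because `ℓ_q` is a normed group in Mathlib only in the presence of
a `Fact (1 ≤ q)` instance. -/
noncomputable def pairEnergy (q : ℝ) (f : V → E) : ℝ :=
  ∑ x : V × V, ‖f x.1 - f x.2‖ ^ q

/-- The `q`-energy `∑ ‖f u - f v‖ ^ q` of `f` over the edges of `G`, each edge counted once: half
the sum over ordered pairs of adjacent vertices. -/
noncomputable def edgeEnergy (G : SimpleGraph V) [DecidableRel G.Adj] (q : ℝ) (f : V → E) : ℝ :=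
  (∑ x : V × V with G.Adj x.1 x.2, ‖f x.1 - f x.2‖ ^ q) / 2

variable (E) in
/-- The `q`-Poincaré inequality on the graph `G` with constant `K` for `E`-valued functions. -/
def PoincareInequality (G : SimpleGraph V) [DecidableRel G.Adj] (q K : ℝ) : Prop :=
  ∀ f : V → E, pairEnergy q f ≤ K * edgeEnergy G q f

variable {G : SimpleGraph V} [DecidableRel G.Adj] {p q K : ℝ}

lemma poincareInequality_iff :
    PoincareInequality E G q K ↔ ∀ f : V → E, ∑ u, ∑ v, ‖f u - f v‖ ^ q ≤
      K * ((∑ u, ∑ v, if G.Adj u v then ‖f u - f v‖ ^ q else 0) / 2) := by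
  simp only [PoincareInequality, pairEnergy, edgeEnergy, sum_filter, Fintype.sum_prod_type]

lemma edgeEnergy_nonneg {E : Type*} [SeminormedAddGroup E] (f : V → E) : 0 ≤ edgeEnergy G q f := by
  unfold edgeEnergy
  positivity

lemma PoincareInequality.mono {E : Type*} [SeminormedAddGroup E] {K' : ℝ}
    (h : PoincareInequality E G q K) (hK : K ≤ K') : PoincareInequality E G q K' :=
  fun f => (h f).trans (mul_le_mul_of_nonneg_right hK (edgeEnergy_nonneg f))

theorem PoincareInequality.to_lp {ι : Type*} {F : ι → Type*} [∀ i, NormedAddCommGroup (F i)]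
    (hq : 0 < q) (h : ∀ i, PoincareInequality (F i) G q K) :
    PoincareInequality (lp F (ENNReal.ofReal q)) G q K := by
  intro f
  have hasSum_coord (x : V × V) :
      HasSum (fun i => ‖f x.1 i - f x.2 i‖ ^ q) (‖f x.1 - f x.2‖ ^ q) := by
    have hq' : (ENNReal.ofReal q).toReal = q := ENNReal.toReal_ofReal hq.le
    simpa only [hq', lp.coeFn_sub, Pi.sub_apply] using
      lp.hasSum_norm (hq'.symm ▸ hq) (f x.1 - f x.2)
  exact hasSum_le (fun i => h i fun u => f u i) (hasSum_sum fun x _ => hasSum_coord x)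
    (((hasSum_sum fun x _ => hasSum_coord x).div_const 2).mul_left K)

theorem PoincareInequality.of_integral_rpow_norm_sub {F Ω : Type*} [Norm F] [Sub F]
    [MeasurableSpace Ω] {μ : Measure Ω} {T : Ω → F → E} {C : ℝ} (hC : 0 < C)
    (hint : ∀ x y, Integrable (fun ω => ‖T ω x - T ω y‖ ^ p) μ)
    (hT : ∀ x y, ∫ ω, ‖T ω x - T ω y‖ ^ p ∂μ = C * ‖x - y‖ ^ q)
    (h : PoincareInequality E G p K) : PoincareInequality F G q K := by
  intro f
  have integrable_sum (s : Finset (V × V)) :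
      Integrable (fun ω => ∑ x ∈ s, ‖T ω (f x.1) - T ω (f x.2)‖ ^ p) μ :=
    integrable_finsetSum _ fun x _ => hint _ _
  have integral_sum (s : Finset (V × V)) :
      ∫ ω, ∑ x ∈ s, ‖T ω (f x.1) - T ω (f x.2)‖ ^ p ∂μ = C * ∑ x ∈ s, ‖f x.1 - f x.2‖ ^ q := by
    rw [integral_finsetSum _ fun x _ => hint _ _, mul_sum]
    exact sum_congr rfl fun x _ => hT _ _
  refine le_of_mul_le_mul_left ?_ hC
  calc C * pairEnergy q f = ∫ ω, pairEnergy p (fun u => T ω (f u)) ∂μ := (integral_sum _).symm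
    _ ≤ ∫ ω, K * edgeEnergy G p (fun u => T ω (f u)) ∂μ :=
      integral_mono (integrable_sum _) (((integrable_sum _).div_const 2).const_mul K)
        fun ω => h fun u => T ω (f u)
    _ = K * ((C * ∑ x : V × V with G.Adj x.1 x.2, ‖f x.1 - f x.2‖ ^ q) / 2) := by
      simp only [edgeEnergy]
      rw [integral_const_mul, integral_div, integral_sum]
    _ = C * (K * edgeEnergy G q f) := by
      unfold edgeEnergy
      ring

end Energy

/-- The signed power `sign x * |x| ^ a`. Written as `x * |x| ^ (a - 1)`, it vanishes at `x = 0` for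
every `a`, and is the sign function for `a = 0`. -/
noncomputable def signedRPow (a x : ℝ) : ℝ := x * |x| ^ (a - 1)

section SignedRPow

variable {a s x y : ℝ}

lemma signedRPow_mul (a x y : ℝ) : signedRPow a (x * y) = signedRPow a x * signedRPow a y := by
  unfold signedRPow
  rw [abs_mul, Real.mul_rpow (abs_nonneg x) (abs_nonneg y)]
  ring

lemma signedRPow_neg (a x : ℝ) : signedRPow a (-x) = -signedRPow a x := by
  simp only [signedRPow, abs_neg, neg_mul]

lemma signedRPow_of_pos (a : ℝ) (hx : 0 < x) : signedRPow a x = x ^ a := by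
  rw [signedRPow, abs_of_pos hx, Real.rpow_sub_one hx.ne', mul_div_cancel₀ _ hx.ne']

lemma signedRPow_of_nonneg (ha : a ≠ 0) (hx : 0 ≤ x) : signedRPow a x = x ^ a := by
  rcases hx.eq_or_lt with rfl | hx
  · simp [signedRPow, Real.zero_rpow ha]
  · exact signedRPow_of_pos a hx

lemma abs_signedRPow_of_base_ne_zero (a : ℝ) (hx : x ≠ 0) : |signedRPow a x| = |x| ^ a := by
  rw [← signedRPow_of_pos a (abs_pos.2 hx), signedRPow, signedRPow, abs_mul, abs_abs,
    abs_of_nonneg (Real.rpow_nonneg (abs_nonneg x) _)]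

lemma abs_signedRPow_of_exponent_ne_zero (ha : a ≠ 0) (x : ℝ) : |signedRPow a x| = |x| ^ a := by
  rcases eq_or_ne x 0 with rfl | hx
  · simp [signedRPow, Real.zero_rpow ha]
  · exact abs_signedRPow_of_base_ne_zero a hx

lemma abs_signedRPow_le_one (ha : 0 ≤ a) (hx : |x| ≤ 1) : |signedRPow a x| ≤ 1 := by
  rcases eq_or_ne x 0 with rfl | hx0
  · simp [signedRPow]
  · exact (abs_signedRPow_of_base_ne_zero a hx0).trans_le
      (Real.rpow_le_one (abs_nonneg x) hx ha)

@[fun_prop]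
lemma measurable_signedRPow (a : ℝ) : Measurable (signedRPow a) := by
  unfold signedRPow
  fun_prop

lemma continuous_signedRPow (hs : 1 ≤ s) : Continuous (signedRPow s) :=
  continuous_id.mul (continuous_abs.rpow_const fun _ => Or.inr (sub_nonneg.2 hs))

lemma rpow_sub_rpow_le (hs : 1 ≤ s) (hy : 0 ≤ y) (hyx : y ≤ x) :
    x ^ s - y ^ s ≤ s * ((x - y) * x ^ (s - 1)) := by
  rcases hyx.eq_or_lt with rfl | hyx
  · simp
  have slope_le : slope (· ^ s) y x ≤ s * x ^ (s - 1) :=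
    (convexOn_rpow hs).slope_le_of_hasDerivAt hy (hy.trans hyx.le) hyx
      (Real.hasDerivAt_rpow_const (Or.inl (hy.trans_lt hyx).ne'))
  rw [slope_def_field, div_le_iff₀ (sub_pos.2 hyx)] at slope_le
  linarith

lemma abs_signedRPow_sub_le (hs : 1 ≤ s) (x y : ℝ) :
    |signedRPow s x - signedRPow s y| ≤ s * (|x - y| * max |x| |y| ^ (s - 1)) := by
  have hs0 : s ≠ 0 := by linarith
  have same_sign {x y : ℝ} (hy : 0 ≤ y) (hyx : y ≤ x) :
      |signedRPow s x - signedRPow s y| ≤ s * (|x - y| * max |x| |y| ^ (s - 1)) := by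
    have hx : 0 ≤ x := hy.trans hyx
    have hmono : y ^ s ≤ x ^ s := by gcongr
    rw [signedRPow_of_nonneg hs0 hx, signedRPow_of_nonneg hs0 hy,
      abs_of_nonneg (sub_nonneg.2 hmono), abs_of_nonneg (sub_nonneg.2 hyx), abs_of_nonneg hx,
      abs_of_nonneg hy, max_eq_left hyx]
    exact rpow_sub_rpow_le hs hy hyx
  wlog hyx : y ≤ x generalizing x y
  · rw [abs_sub_comm, abs_sub_comm x, max_comm]
    exact this y x (le_of_not_ge hyx)
  rcases le_total 0 y with hy | hy
  · exact same_sign hy hyx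
  rcases le_total x 0 with hx | hx
  · have h := same_sign (neg_nonneg.2 hx) (neg_le_neg hyx)
    rwa [signedRPow_neg, signedRPow_neg, abs_neg, abs_neg, neg_sub_neg, neg_sub_neg, max_comm] at h
  calc |signedRPow s x - signedRPow s y| ≤ |signedRPow s x| + |signedRPow s y| := abs_sub _ _
    _ = |x| * |x| ^ (s - 1) + |y| * |y| ^ (s - 1) := by
      simp only [signedRPow, abs_mul, abs_of_nonneg (Real.rpow_nonneg (abs_nonneg _) (s - 1))]
    _ ≤ |x| * max |x| |y| ^ (s - 1) + |y| * max |x| |y| ^ (s - 1) := by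
      have : 0 ≤ s - 1 := sub_nonneg.2 hs
      gcongr
      exacts [le_max_left _ _, le_max_right _ _]
    _ = |x - y| * max |x| |y| ^ (s - 1) := by
      rw [abs_of_nonneg hx, abs_of_nonpos hy, abs_of_nonneg (sub_nonneg.2 hyx)]
      ring
    _ ≤ s * (|x - y| * max |x| |y| ^ (s - 1)) := le_mul_of_one_le_left (by positivity) hs

end SignedRPow

section SmallExponent

variable {a p : ℝ}

lemma rpow_sub_rpow_sub_one_le {w : ℝ} (ha : a ≤ 1) (hw : 1 < w) :
    w ^ a - (w - 1) ^ a ≤ w ^ (a - 1) := by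
  have hw0 : 0 < w := by linarith
  have hw1 : 0 < w - 1 := by linarith
  have hanti : w ^ (a - 1) ≤ (w - 1) ^ (a - 1) :=
    Real.rpow_le_rpow_of_nonpos hw1 (by linarith) (by linarith)
  calc w ^ a - (w - 1) ^ a = w * w ^ (a - 1) - (w - 1) * (w - 1) ^ (a - 1) := by
        rw [Real.rpow_sub_one hw0.ne', Real.rpow_sub_one hw1.ne', mul_div_cancel₀ _ hw0.ne',
          mul_div_cancel₀ _ hw1.ne']
    _ ≤ w * w ^ (a - 1) - (w - 1) * w ^ (a - 1) := by gcongr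
    _ = w ^ (a - 1) := by ring

lemma abs_signedRPow_add_one_sub_le_of_one_lt {w : ℝ} (ha : 0 ≤ a) (ha1 : a ≤ 1) (hw : 1 < w) :
    |signedRPow a w + signedRPow a (1 - w)| ≤ w ^ (a - 1) := by
  have hmono : (w - 1) ^ a ≤ w ^ a :=
    Real.rpow_le_rpow (by linarith) (by linarith) ha
  rw [← neg_sub w 1, signedRPow_neg, signedRPow_of_pos a (by linarith),
    signedRPow_of_pos a (by linarith), ← sub_eq_add_neg, abs_of_nonneg (sub_nonneg.2 hmono)]
  exact rpow_sub_rpow_sub_one_le ha1 hw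

lemma abs_signedRPow_add_one_sub_le (ha : 0 ≤ a) (ha1 : a ≤ 1) (t : ℝ) :
    |signedRPow a t + signedRPow a (1 - t)| ≤ 4 * (1 + |t|) ^ (a - 1) := by
  have half_le : (1 / 2 : ℝ) ≤ 2 ^ (a - 1) := by
    simpa [Real.rpow_neg_one] using
      Real.rpow_le_rpow_of_exponent_le one_le_two (by linarith : (-1 : ℝ) ≤ a - 1)
  rcases lt_or_ge t 0 with ht | ht
  · have h := abs_signedRPow_add_one_sub_le_of_one_lt ha ha1 (by linarith : 1 < 1 - t)
    rw [sub_sub_cancel, add_comm] at h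
    rw [abs_of_neg ht, ← sub_eq_add_neg]
    have : 0 ≤ (1 - t) ^ (a - 1) := Real.rpow_nonneg (by linarith) _
    linarith
  rw [abs_of_nonneg ht]
  rcases le_or_gt t 1 with ht1 | ht1
  · have : (2 : ℝ) ^ (a - 1) ≤ (1 + t) ^ (a - 1) :=
      Real.rpow_le_rpow_of_nonpos (by linarith) (by linarith) (by linarith)
    have := abs_add_le (signedRPow a t) (signedRPow a (1 - t))
    have := abs_signedRPow_le_one ha (abs_le.2 ⟨by linarith, ht1⟩)
    have := abs_signedRPow_le_one ha (x := 1 - t) (abs_le.2 ⟨by linarith, by linarith⟩)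
    linarith
  · calc |signedRPow a t + signedRPow a (1 - t)| ≤ t ^ (a - 1) :=
          abs_signedRPow_add_one_sub_le_of_one_lt ha ha1 ht1
      _ ≤ 4 * (2 ^ (a - 1) * t ^ (a - 1)) := by
        nlinarith [Real.rpow_nonneg ht (a - 1)]
      _ = 4 * (2 * t) ^ (a - 1) := by rw [Real.mul_rpow two_pos.le ht]
      _ ≤ 4 * (1 + t) ^ (a - 1) :=
        mul_le_mul_of_nonneg_left
          (Real.rpow_le_rpow_of_nonpos (by linarith) (by linarith) (by linarith)) (by norm_num)

lemma integrable_abs_signedRPow_add_one_sub_rpow (ha : 0 ≤ a) (hp : 0 < p)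
    (hap : 1 < (1 - a) * p) :
    Integrable fun t => |signedRPow a t + signedRPow a (1 - t)| ^ p := by
  have ha1 : a ≤ 1 := by
    by_contra! h
    nlinarith
  have hmeas : Measurable fun t => |signedRPow a t + signedRPow a (1 - t)| ^ p := by
    fun_prop
  have hdom : Integrable fun t : ℝ => 4 ^ p * (1 + ‖t‖) ^ (-((1 - a) * p)) :=
    (integrable_one_add_norm (by simpa using hap)).const_mul _
  refine hdom.mono' hmeas.aestronglyMeasurable (Filter.Eventually.of_forall fun t => ?_)
  have ht : 0 ≤ 1 + |t| := by positivity
  rw [Real.norm_of_nonneg (by positivity)]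
  calc |signedRPow a t + signedRPow a (1 - t)| ^ p ≤ (4 * (1 + |t|) ^ (a - 1)) ^ p := by
        gcongr
        exact abs_signedRPow_add_one_sub_le ha ha1 t
    _ = 4 ^ p * (1 + ‖t‖) ^ (-((1 - a) * p)) := by
      rw [Real.mul_rpow (by norm_num) (by positivity), ← Real.rpow_mul ht, Real.norm_eq_abs]
      ring_nf

lemma integral_abs_signedRPow_add_one_sub_rpow_pos (ha : 0 ≤ a) (hp : 0 < p)
    (hap : 1 < (1 - a) * p) :
    0 < ∫ t, |signedRPow a t + signedRPow a (1 - t)| ^ p := by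
  rw [integral_pos_iff_support_of_nonneg (fun t => by positivity)
    (integrable_abs_signedRPow_add_one_sub_rpow ha hp hap)]
  have hsub : Set.Ioo (0 : ℝ) 1 ⊆
      Function.support fun t => |signedRPow a t + signedRPow a (1 - t)| ^ p := by
    intro t ht
    have ht0 : 0 < t := ht.1
    have ht1 : 0 < 1 - t := sub_pos.2 ht.2
    rw [Function.mem_support, signedRPow_of_pos a ht0, signedRPow_of_pos a ht1]
    positivity
  exact lt_of_lt_of_le (by simp) (measure_mono hsub)

lemma abs_signedRPow_sub_sub_rpow {x y : ℝ} (hxy : x ≠ y) (t : ℝ) :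
    |signedRPow a (x - t) - signedRPow a (y - t)| ^ p = |x - y| ^ (a * p) *
      |signedRPow a ((t - y) / (x - y)) + signedRPow a (1 - (t - y) / (x - y))| ^ p := by
  have hne : x - y ≠ 0 := sub_ne_zero.2 hxy
  have hx : x - t = (x - y) * (1 - (t - y) / (x - y)) := by field_simp; ring
  have hy : y - t = (x - y) * -((t - y) / (x - y)) := by field_simp; ring
  rw [hx, hy, signedRPow_mul, signedRPow_mul, signedRPow_neg, ← mul_sub, sub_neg_eq_add, add_comm,
    abs_mul, abs_signedRPow_of_base_ne_zero a hne,
    Real.mul_rpow (by positivity) (abs_nonneg _), ← Real.rpow_mul (abs_nonneg _)]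

lemma integrable_abs_signedRPow_sub_sub_rpow (ha : 0 ≤ a) (hp : 0 < p) (hap : 1 < (1 - a) * p)
    (x y : ℝ) : Integrable fun t => |signedRPow a (x - t) - signedRPow a (y - t)| ^ p := by
  rcases eq_or_ne x y with rfl | hxy
  · simp [Real.zero_rpow hp.ne']
  simp only [abs_signedRPow_sub_sub_rpow hxy]
  exact (((integrable_abs_signedRPow_add_one_sub_rpow ha hp hap).comp_div
    (sub_ne_zero.2 hxy)).comp_sub_right y).const_mul _

lemma integral_abs_signedRPow_sub_sub_rpow (hp : p ≠ 0) (hap : a * p + 1 ≠ 0) (x y : ℝ) :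
    ∫ t, |signedRPow a (x - t) - signedRPow a (y - t)| ^ p =
      (∫ t, |signedRPow a t + signedRPow a (1 - t)| ^ p) * |x - y| ^ (a * p + 1) := by
  rcases eq_or_ne x y with rfl | hxy
  · simp [Real.zero_rpow hp, Real.zero_rpow hap]
  have hne : |x - y| ≠ 0 := abs_ne_zero.2 (sub_ne_zero.2 hxy)
  simp only [abs_signedRPow_sub_sub_rpow hxy]
  rw [integral_const_mul, integral_sub_right_eq_self (fun t =>
      |signedRPow a (t / (x - y)) + signedRPow a (1 - t / (x - y))| ^ p) y,
    Measure.integral_comp_div (fun t => |signedRPow a t + signedRPow a (1 - t)| ^ p),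
    smul_eq_mul, Real.rpow_add_one hne]
  ring

theorem PoincareInequality.of_exponent_le {V : Type*} [Fintype V] {G : SimpleGraph V}
    [DecidableRel G.Adj] {q K : ℝ} (hq : 1 ≤ q) (hqp : q ≤ p) (h : PoincareInequality ℝ G p K) :
    PoincareInequality ℝ G q K := by
  rcases hqp.eq_or_lt with rfl | hqp
  · exact h
  have hp : 0 < p := by linarith
  have ha : 0 ≤ (q - 1) / p := div_nonneg (by linarith) hp.le
  have ha_mul : (q - 1) / p * p = q - 1 := div_mul_cancel₀ _ hp.ne'
  have hap : 1 < (1 - (q - 1) / p) * p := by linarith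
  refine h.of_integral_rpow_norm_sub (T := fun t x => signedRPow ((q - 1) / p) (x - t))
    (integral_abs_signedRPow_add_one_sub_rpow_pos ha hp hap)
    (integrable_abs_signedRPow_sub_sub_rpow ha hp hap) fun x y => ?_
  have hint := integral_abs_signedRPow_sub_sub_rpow hp.ne' (a := (q - 1) / p) (by linarith) x y
  rwa [ha_mul, sub_add_cancel] at hint

end SmallExponent

section LargeExponent

lemma sum_rpow_mul_rpow_sub_le {ι : Type*} (t : Finset ι) {b c : ι → ℝ} {p q : ℝ} (hp : 0 < p)
    (hpq : p < q) (hb : ∀ i ∈ t, 0 ≤ b i) (hc : ∀ i ∈ t, 0 ≤ c i) :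
    ∑ i ∈ t, b i ^ p * c i ^ (q - p) ≤
      (∑ i ∈ t, b i ^ q) ^ (p / q) * (∑ i ∈ t, c i ^ q) ^ (1 - p / q) := by
  have hq : 0 < q := hp.trans hpq
  have hsub : 0 < q - p := sub_pos.2 hpq
  have hconj : (q / p).HolderConjugate (q / (q - p)) := by
    rw [Real.holderConjugate_iff]
    refine ⟨(one_lt_div hp).2 hpq, ?_⟩
    field_simp
    ring
  have holder := Real.inner_le_Lp_mul_Lq_of_nonneg t hconj (f := fun i => b i ^ p)
    (g := fun i => c i ^ (q - p)) (fun i hi => Real.rpow_nonneg (hb i hi) _)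
    (fun i hi => Real.rpow_nonneg (hc i hi) _)
  have hbq : ∀ i ∈ t, (b i ^ p) ^ (q / p) = b i ^ q := fun i hi => by
    rw [← Real.rpow_mul (hb i hi), mul_div_cancel₀ _ hp.ne']
  have hcq : ∀ i ∈ t, (c i ^ (q - p)) ^ (q / (q - p)) = c i ^ q := fun i hi => by
    rw [← Real.rpow_mul (hc i hi), mul_div_cancel₀ _ hsub.ne']
  rwa [sum_congr rfl hbq, sum_congr rfl hcq, one_div_div, one_div_div, sub_div, div_self hq.ne']
    at holder

lemma le_rpow_one_div_mul_of_le_mul_rpow {x y c θ : ℝ} (hx : 0 ≤ x) (hy : 0 ≤ y) (hc : 0 ≤ c)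
    (hθ : 0 < θ) (h : x ≤ c * (y ^ θ * x ^ (1 - θ))) : x ≤ c ^ (1 / θ) * y := by
  rcases hx.eq_or_lt with rfl | hx
  · positivity
  have hpow : x ^ θ ≤ c * y ^ θ := by
    refine le_of_mul_le_mul_right ?_ (Real.rpow_pos_of_pos hx (1 - θ))
    rwa [← Real.rpow_add hx, add_sub_cancel, Real.rpow_one, mul_assoc]
  rw [← Real.rpow_le_rpow_iff hx.le (by positivity) hθ, Real.mul_rpow (by positivity) hy,
    ← Real.rpow_mul hc, one_div_mul_cancel hθ.ne', Real.rpow_one]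
  exact hpow

variable {V : Type*} [Fintype V]

lemma card_mul_rpow_norm_le_sum {E : Type*} [NormedAddCommGroup E] [NormedSpace ℝ E] {p : ℝ}
    {g : V → E} (hp : 1 ≤ p) (hg : ∑ v, g v = 0) (u : V) :
    Fintype.card V * ‖g u‖ ^ p ≤ ∑ v, ‖g u - g v‖ ^ p := by
  have hn : (0 : ℝ) < Fintype.card V := Nat.cast_pos.2 (Fintype.card_pos_iff.2 ⟨u⟩)
  have triangle : Fintype.card V * ‖g u‖ ≤ ∑ v, ‖g u - g v‖ := by
    calc Fintype.card V * ‖g u‖ = ‖∑ v, (g u - g v)‖ := by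
          simp [sum_sub_distrib, hg, ← Nat.cast_smul_eq_nsmul ℝ, norm_smul]
      _ ≤ ∑ v, ‖g u - g v‖ := norm_sum_le _ _
  refine le_of_mul_le_mul_left ?_ (Real.rpow_pos_of_pos hn (p - 1))
  calc (Fintype.card V : ℝ) ^ (p - 1) * (Fintype.card V * ‖g u‖ ^ p)
      = (Fintype.card V * ‖g u‖) ^ p := by
        rw [← mul_assoc, ← Real.rpow_add_one hn.ne', sub_add_cancel,
          Real.mul_rpow hn.le (norm_nonneg _)]
    _ ≤ (∑ v, ‖g u - g v‖) ^ p := by gcongr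
    _ ≤ (Fintype.card V : ℝ) ^ (p - 1) * ∑ v, ‖g u - g v‖ ^ p :=
      Real.rpow_sum_le_const_mul_sum_rpow_of_nonneg univ hp fun _ _ => norm_nonneg _

lemma card_mul_sum_rpow_norm_le_pairEnergy {E : Type*} [NormedAddCommGroup E] [NormedSpace ℝ E]
    {p : ℝ} {g : V → E} (hp : 1 ≤ p) (hg : ∑ v, g v = 0) :
    Fintype.card V * ∑ u, ‖g u‖ ^ p ≤ pairEnergy p g := by
  rw [pairEnergy, Fintype.sum_prod_type, mul_sum]
  exact sum_le_sum fun u _ => card_mul_rpow_norm_le_sum hp hg u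

lemma rpow_norm_sub_le {E : Type*} [SeminormedAddCommGroup E] {q : ℝ} (hq : 1 ≤ q) (x y : E) :
    ‖x - y‖ ^ q ≤ 2 ^ (q - 1) * (‖x‖ ^ q + ‖y‖ ^ q) :=
  calc ‖x - y‖ ^ q ≤ (‖x‖ + ‖y‖) ^ q := by
        gcongr
        exact norm_sub_le x y
    _ ≤ 2 ^ (q - 1) * (‖x‖ ^ q + ‖y‖ ^ q) :=
      mod_cast NNReal.rpow_add_le_mul_rpow_add_rpow ‖x‖₊ ‖y‖₊ hq

lemma pairEnergy_le_two_rpow_mul {E : Type*} [SeminormedAddCommGroup E] {q : ℝ} (hq : 1 ≤ q)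
    (f : V → E) : pairEnergy q f ≤ 2 ^ q * (Fintype.card V * ∑ u, ‖f u‖ ^ q) :=
  calc pairEnergy q f ≤ ∑ x : V × V, 2 ^ (q - 1) * (‖f x.1‖ ^ q + ‖f x.2‖ ^ q) :=
        sum_le_sum fun x _ => rpow_norm_sub_le hq _ _
    _ = 2 ^ (q - 1) * (2 * (Fintype.card V * ∑ u, ‖f u‖ ^ q)) := by
      simp only [← mul_sum, Fintype.sum_prod_type, sum_add_distrib, sum_const, card_univ,
        nsmul_eq_mul]
      ring
    _ = 2 ^ q * (Fintype.card V * ∑ u, ‖f u‖ ^ q) := by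
      rw [← mul_assoc, ← Real.rpow_add_one two_ne_zero, sub_add_cancel]

lemma exists_sum_signedRPow_sub_eq_zero {s : ℝ} (hs : 1 ≤ s) (f : V → ℝ) :
    ∃ c, ∑ u, signedRPow s (f u - c) = 0 := by
  have hcont : Continuous fun c => ∑ u, signedRPow s (f u - c) :=
    continuous_finsetSum _ fun u _ =>
      (continuous_signedRPow hs).comp (continuous_const.sub continuous_id)
  have abs_le_sum (u : V) : |f u| ≤ ∑ v, |f v| :=
    single_le_sum (f := fun v => |f v|) (fun _ _ => abs_nonneg _) (mem_univ u)
  refine mem_range_of_exists_le_of_exists_ge hcont ⟨∑ v, |f v|, ?_⟩ ⟨-∑ v, |f v|, ?_⟩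
  · exact sum_nonpos fun u _ => mul_nonpos_of_nonpos_of_nonneg
      (by linarith [abs_le_sum u, le_abs_self (f u)]) (by positivity)
  · exact sum_nonneg fun u _ => mul_nonneg
      (by linarith [abs_le_sum u, neg_abs_le (f u)]) (by positivity)

variable {G : SimpleGraph V} [DecidableRel G.Adj]

lemma sum_adj_fst_eq_sum_degree_mul (φ : V → ℝ) :
    ∑ x : V × V with G.Adj x.1 x.2, φ x.1 = ∑ u, G.degree u * φ u := by
  simp only [sum_filter, Fintype.sum_prod_type, ← G.card_neighborFinset_eq_degree,
    G.neighborFinset_eq_filter, ← nsmul_eq_mul, ← sum_const]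

lemma sum_adj_snd_eq_sum_degree_mul (φ : V → ℝ) :
    ∑ x : V × V with G.Adj x.1 x.2, φ x.2 = ∑ u, G.degree u * φ u := by
  rw [← sum_adj_fst_eq_sum_degree_mul]
  exact sum_equiv (Equiv.prodComm V V) (by simp [G.adj_comm]) (by simp)

variable {Δ p q : ℝ}

lemma sum_adj_max_rpow_le (hdeg : ∀ v, (G.degree v : ℝ) ≤ Δ) (f : V → ℝ) :
    ∑ x : V × V with G.Adj x.1 x.2, max |f x.1| |f x.2| ^ q ≤ 2 * (Δ * ∑ u, |f u| ^ q) := by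
  have max_rpow_le (u v : V) : max |f u| |f v| ^ q ≤ |f u| ^ q + |f v| ^ q := by
    rcases max_choice |f u| |f v| with h | h <;> rw [h]
    · exact le_add_of_nonneg_right (by positivity)
    · exact le_add_of_nonneg_left (by positivity)
  calc ∑ x : V × V with G.Adj x.1 x.2, max |f x.1| |f x.2| ^ q
      ≤ ∑ x : V × V with G.Adj x.1 x.2, (|f x.1| ^ q + |f x.2| ^ q) :=
        sum_le_sum fun x _ => max_rpow_le _ _
    _ = 2 * ∑ u, G.degree u * |f u| ^ q := by
      rw [sum_add_distrib, sum_adj_fst_eq_sum_degree_mul (fun u => |f u| ^ q),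
        sum_adj_snd_eq_sum_degree_mul (fun u => |f u| ^ q), two_mul]
    _ ≤ 2 * (Δ * ∑ u, |f u| ^ q) := by
      rw [mul_sum _ _ Δ]
      gcongr with u
      exact hdeg u

lemma abs_signedRPow_div_sub_rpow_le (hp : 0 < p) (hpq : p ≤ q) (x y : ℝ) :
    |signedRPow (q / p) x - signedRPow (q / p) y| ^ p ≤
      (q / p) ^ p * (|x - y| ^ p * max |x| |y| ^ (q - p)) := by
  have hs : 1 ≤ q / p := (one_le_div hp).2 hpq
  have hexp : (q / p - 1) * p = q - p := by rw [sub_mul, div_mul_cancel₀ _ hp.ne', one_mul]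
  calc |signedRPow (q / p) x - signedRPow (q / p) y| ^ p
      ≤ (q / p * (|x - y| * max |x| |y| ^ (q / p - 1))) ^ p := by
        gcongr
        exact abs_signedRPow_sub_le hs x y
    _ = (q / p) ^ p * (|x - y| ^ p * max |x| |y| ^ (q - p)) := by
      rw [Real.mul_rpow (by linarith) (by positivity),
        Real.mul_rpow (by positivity) (by positivity), ← Real.rpow_mul (by positivity), hexp]

lemma edgeEnergy_signedRPow_le (hdeg : ∀ v, (G.degree v : ℝ) ≤ Δ) (hΔ : 0 ≤ Δ) (hp : 0 < p)
    (hpq : p < q) (f : V → ℝ) :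
    edgeEnergy G p (fun u => signedRPow (q / p) (f u)) ≤
      (q / p) ^ p * (edgeEnergy G q f ^ (p / q) * (Δ * ∑ u, |f u| ^ q) ^ (1 - p / q)) := by
  have hq : 0 < q := hp.trans hpq
  have hθ : 0 ≤ 1 - p / q := sub_nonneg.2 ((div_le_one hq).2 hpq.le)
  have two_mul_edgeEnergy :
      ∑ x : V × V with G.Adj x.1 x.2, |f x.1 - f x.2| ^ q = 2 * edgeEnergy G q f :=
    (mul_div_cancel₀ _ two_ne_zero).symm
  suffices h : ∑ x : V × V with G.Adj x.1 x.2,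
      |signedRPow (q / p) (f x.1) - signedRPow (q / p) (f x.2)| ^ p ≤
      (q / p) ^ p * (2 * (edgeEnergy G q f ^ (p / q) * (Δ * ∑ u, |f u| ^ q) ^ (1 - p / q))) from
    (div_le_iff₀ two_pos).2 (h.trans_eq (by ring))
  calc ∑ x : V × V with G.Adj x.1 x.2,
        |signedRPow (q / p) (f x.1) - signedRPow (q / p) (f x.2)| ^ p
      ≤ (q / p) ^ p * ∑ x : V × V with G.Adj x.1 x.2,
          |f x.1 - f x.2| ^ p * max |f x.1| |f x.2| ^ (q - p) := by
        rw [mul_sum]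
        exact sum_le_sum fun x _ => abs_signedRPow_div_sub_rpow_le hp hpq.le _ _
    _ ≤ (q / p) ^ p * ((2 * edgeEnergy G q f) ^ (p / q) *
          (2 * (Δ * ∑ u, |f u| ^ q)) ^ (1 - p / q)) := by
      rw [← two_mul_edgeEnergy]
      gcongr
      refine (sum_rpow_mul_rpow_sub_le _ hp hpq (fun _ _ => abs_nonneg _)
        fun _ _ => by positivity).trans ?_
      gcongr
      exact sum_adj_max_rpow_le hdeg f
    _ = (q / p) ^ p *
          (2 * (edgeEnergy G q f ^ (p / q) * (Δ * ∑ u, |f u| ^ q) ^ (1 - p / q))) := by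
      rw [Real.mul_rpow two_pos.le (edgeEnergy_nonneg f), Real.mul_rpow two_pos.le (by positivity),
        mul_mul_mul_comm, ← Real.rpow_add two_pos, add_sub_cancel, Real.rpow_one]

variable {B : ℝ}

lemma PoincareInequality.mul_sum_rpow_abs_le_edgeEnergy
    (h : PoincareInequality ℝ G p (B ^ p * (Fintype.card V / Δ)))
    (hdeg : ∀ v, (G.degree v : ℝ) ≤ Δ) (hΔ : 0 < Δ) (hB : 0 ≤ B) (hp : 1 ≤ p) (hpq : p < q)
    {f : V → ℝ} (hf : ∑ u, signedRPow (q / p) (f u) = 0) :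
    Δ * ∑ u, |f u| ^ q ≤ (q / p * B) ^ q * edgeEnergy G q f := by
  have hp0 : 0 < p := by linarith
  have hq0 : 0 < q := by linarith
  rcases isEmpty_or_nonempty V with _ | _
  · simp [edgeEnergy]
  have hn : (0 : ℝ) < Fintype.card V := Nat.cast_pos.2 Fintype.card_pos
  have hpow (u : V) : ‖signedRPow (q / p) (f u)‖ ^ p = |f u| ^ q := by
    rw [Real.norm_eq_abs, abs_signedRPow_of_exponent_ne_zero (by positivity),
      ← Real.rpow_mul (abs_nonneg _), div_mul_cancel₀ _ hp0.ne']
  have hself : Δ * ∑ u, |f u| ^ q ≤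
      (q / p * B) ^ p * (edgeEnergy G q f ^ (p / q) * (Δ * ∑ u, |f u| ^ q) ^ (1 - p / q)) := by
    refine le_of_mul_le_mul_left ?_ (div_pos hn hΔ)
    calc Fintype.card V / Δ * (Δ * ∑ u, |f u| ^ q)
        = Fintype.card V * ∑ u, ‖signedRPow (q / p) (f u)‖ ^ p := by
          simp only [hpow]
          field_simp
      _ ≤ pairEnergy p (fun u => signedRPow (q / p) (f u)) :=
        card_mul_sum_rpow_norm_le_pairEnergy hp hf
      _ ≤ B ^ p * (Fintype.card V / Δ) * edgeEnergy G p (fun u => signedRPow (q / p) (f u)) := h _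
      _ ≤ B ^ p * (Fintype.card V / Δ) * ((q / p) ^ p *
            (edgeEnergy G q f ^ (p / q) * (Δ * ∑ u, |f u| ^ q) ^ (1 - p / q))) := by
        gcongr
        exact edgeEnergy_signedRPow_le hdeg hΔ.le hp0 hpq f
      _ = Fintype.card V / Δ * ((q / p * B) ^ p *
            (edgeEnergy G q f ^ (p / q) * (Δ * ∑ u, |f u| ^ q) ^ (1 - p / q))) := by
        rw [Real.mul_rpow (by positivity) hB]
        ring
  have habsorb := le_rpow_one_div_mul_of_le_mul_rpow (by positivity) (edgeEnergy_nonneg f)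
    (by positivity) (div_pos hp0 hq0) hself
  rwa [one_div_div, ← Real.rpow_mul (by positivity), mul_div_cancel₀ _ hp0.ne'] at habsorb

theorem PoincareInequality.of_exponent_lt
    (h : PoincareInequality ℝ G p (B ^ p * (Fintype.card V / Δ)))
    (hdeg : ∀ v, (G.degree v : ℝ) ≤ Δ) (hΔ : 0 < Δ) (hB : 0 ≤ B) (hp : 1 ≤ p) (hpq : p < q) :
    PoincareInequality ℝ G q ((2 * (q / p * B)) ^ q * (Fintype.card V / Δ)) := by
  intro f
  have hs : 1 ≤ q / p := (one_le_div (by linarith)).2 hpq.le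
  obtain ⟨c, hc⟩ := exists_sum_signedRPow_sub_eq_zero hs f
  have pairEnergy_sub : pairEnergy q (fun u => f u - c) = pairEnergy q f := by
    simp only [pairEnergy, sub_sub_sub_cancel_right]
  have edgeEnergy_sub : edgeEnergy G q (fun u => f u - c) = edgeEnergy G q f := by
    simp only [edgeEnergy, sub_sub_sub_cancel_right]
  have hbound := h.mul_sum_rpow_abs_le_edgeEnergy hdeg hΔ hB hp hpq hc
  rw [edgeEnergy_sub] at hbound
  calc pairEnergy q f = pairEnergy q (fun u => f u - c) := pairEnergy_sub.symm
    _ ≤ 2 ^ q * (Fintype.card V * ∑ u, |f u - c| ^ q) :=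
      pairEnergy_le_two_rpow_mul (by linarith) _
    _ = 2 ^ q * (Fintype.card V / Δ) * (Δ * ∑ u, |f u - c| ^ q) := by field_simp
    _ ≤ 2 ^ q * (Fintype.card V / Δ) * ((q / p * B) ^ q * edgeEnergy G q f) := by gcongr
    _ = (2 * (q / p * B)) ^ q * (Fintype.card V / Δ) * edgeEnergy G q f := by
      rw [Real.mul_rpow two_pos.le (by positivity)]
      ring

end LargeExponent

theorem poincare_extrapolation_general {V ι : Type*} [Fintype V] {G : SimpleGraph V}
    [DecidableRel G.Adj] {Δ p A : ℝ} (hΔ : 0 < Δ) (hdeg : ∀ v, (G.degree v : ℝ) ≤ Δ)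
    (hp : 1 ≤ p) (hA : 0 ≤ A)
    (h : PoincareInequality ℝ G p ((A * p) ^ p * (Fintype.card V / Δ))) :
    (∀ q, 1 ≤ q → q ≤ p → PoincareInequality (lp (fun _ : ι => ℝ) (ENNReal.ofReal q)) G q
      ((A * p) ^ p * (Fintype.card V / Δ))) ∧
    (∀ q, p < q → PoincareInequality (lp (fun _ : ι => ℝ) (ENNReal.ofReal q)) G q
      ((2 * A * q) ^ q * (Fintype.card V / Δ))) := by
  have hp0 : 0 < p := by linarith
  refine ⟨fun q hq hqp => .to_lp (by linarith) fun _ => h.of_exponent_le hq hqp,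
    fun q hpq => .to_lp (by linarith) fun _ => ?_⟩
  have hconst : 2 * (q / p * (A * p)) = 2 * A * q := by field_simp
  exact hconst ▸ h.of_exponent_lt hdeg hΔ (mul_nonneg hA hp0.le) hp hpq

/-- Extrapolation lemma for Poincaré inequalities: if a graph with maximal degree at
most `Δ` satisfies the scalar `p`-Poincaré inequality with constant `(Ap)^p`, then
(i) for `1 ≤ q ≤ p` the `ℓ_q`-valued `q`-Poincaré inequality holds with the same
constant, and (ii) for `q > p` it holds with constant `(4Aq)^q`. (Edge sums count
each edge once, i.e. are half the sums over ordered adjacent pairs.) -/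
theorem poincare_extrapolation
    (V : Type) [Fintype V] [DecidableEq V] (G : SimpleGraph V) [DecidableRel G.Adj]
    (Δ : ℕ) (hΔ : 1 ≤ Δ) (hdeg : ∀ v : V, G.degree v ≤ Δ)
    (p A : ℝ) (hp : 1 ≤ p) (hA : 0 < A)
    (hpoin : ∀ f : V → ℝ,
      ∑ u, ∑ v, |f u - f v| ^ p ≤
        (A * p) ^ p * ((Fintype.card V : ℝ) / Δ) *
          ((∑ u, ∑ v, if G.Adj u v then |f u - f v| ^ p else 0) / 2)) :
    (∀ q : ℝ, 1 ≤ q → q ≤ p →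
      ∀ f : V → lp (fun _ : ℕ => ℝ) (ENNReal.ofReal q),
        ∑ u, ∑ v, ‖f u - f v‖ ^ q ≤
          (A * p) ^ p * ((Fintype.card V : ℝ) / Δ) *
            ((∑ u, ∑ v, if G.Adj u v then ‖f u - f v‖ ^ q else 0) / 2)) ∧
    (∀ q : ℝ, p < q →
      ∀ f : V → lp (fun _ : ℕ => ℝ) (ENNReal.ofReal q),
        ∑ u, ∑ v, ‖f u - f v‖ ^ q ≤
          (4 * A * q) ^ q * ((Fintype.card V : ℝ) / Δ) *
            ((∑ u, ∑ v, if G.Adj u v then ‖f u - f v‖ ^ q else 0) / 2)) := by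
  obtain ⟨small, large⟩ := poincare_extrapolation_general (ι := ℕ) (Nat.cast_pos.2 hΔ)
    (fun v => Nat.cast_le.2 (hdeg v)) hp hA.le (poincareInequality_iff.2 hpoin)
  refine ⟨fun q hq hqp => poincareInequality_iff.1 (small q hq hqp), fun q hpq => ?_⟩
  have hq : 0 < q := by linarith
  have : Fact (1 ≤ ENNReal.ofReal q) := ⟨ENNReal.one_le_ofReal.2 (by linarith)⟩
  refine poincareInequality_iff.1 ((large q hpq).mono ?_)
  gcongr
  norm_num
end
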